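/- arXiv:1008.0550 — 4 statements merged into one kernel-verified Lean document; each statement's English description precedes it below -/
import Mathlib

section
/- Let 0<u_-<u_+<1 and b−a>0. Then there exists a unique constant J_{a,b} with J_{a,b} < min{u_-(1−u_-), u_+(1−u_+)} satisfying ∫_{u_-}^{u_+} dr/(r(1−r)−J_{a,b}) = b−a. Moreover J_{a,b} < 1/4 always, and J_{a,b} > 0 provided b−a > log(u_+/(1−u_+)) − log(u_- /(1−u_-)). -/
open MeasureTheory Real Filter Topology Set

/-!
Write `F J = ∫_{u₋}^{u₊} dr / (r(1-r) - J)` and `m = min (u₋(1-u₋)) (u₊(1-u₊))`. By concavity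
`r(1-r) ≥ m` on `[u₋, u₊]`, so for `J < m` the integrand is positive and continuous, and `F` is
strictly increasing in `J`; this gives uniqueness. Existence is the intermediate value theorem on
an explicit interval, with `L = u₊ - u₋` and `T = b - a`: bounding the integrand by `1 / (m - J)`
gives `F (m - L/T) ≤ T`, while `r(1-r) - m` is at most the distance from `r` to the endpoint where
the minimum is attained, so `F (m - e) ≥ log ((L + e)/e)`, which is at least `T` for
`e = L exp(-T)`. Finally `m ≤ 1/4`, and `F 0` is the difference of the logarithms
`log (u/(1-u))`, so monotonicity forces `J > 0` as soon as `T > F 0`.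
-/

/-- Concavity of `r ↦ r(1-r)`: on an interval it is bounded below by its minimum over the
endpoints. -/
lemma min_le_flux {um up r : ℝ} (hr : r ∈ Icc um up) :
    min (um * (1 - um)) (up * (1 - up)) ≤ r * (1 - r) := by
  obtain ⟨ha, hb⟩ := hr
  by_contra! h
  obtain ⟨h3, h4⟩ := lt_min_iff.1 h
  -- The two differences are `(r - um) * (1 - r - um)` and `(up - r) * (r + up - 1)`.
  have h5 : 1 - r - um < 0 := by
    by_contra! h5
    nlinarith [mul_nonneg (sub_nonneg.2 ha) h5]
  have h6 : r + up - 1 < 0 := by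
    by_contra! h6
    nlinarith [mul_nonneg (sub_nonneg.2 hb) h6]
  linarith

lemma intervalIntegrable_flux_inv {um up J : ℝ} (h1 : um < up)
    (hJ : J < min (um * (1 - um)) (up * (1 - up))) :
    ContinuousOn (fun r : ℝ => (r * (1 - r) - J)⁻¹) (Icc um up) ∧
      IntervalIntegrable (fun r : ℝ => (r * (1 - r) - J)⁻¹) volume um up := by
  have hc : ContinuousOn (fun r : ℝ => (r * (1 - r) - J)⁻¹) (Icc um up) := by
    apply ContinuousOn.inv₀ (by fun_prop)
    intro r hr
    have := min_le_flux hr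
    exact (by linarith : 0 < r * (1 - r) - J).ne'
  exact ⟨hc, hc.intervalIntegrable_of_Icc h1.le⟩

lemma integral_flux_inv_lt {um up J K : ℝ} (h1 : um < up) (hJK : J < K)
    (hK : K < min (um * (1 - um)) (up * (1 - up))) :
    (∫ r in um..up, (r * (1 - r) - J)⁻¹) < ∫ r in um..up, (r * (1 - r) - K)⁻¹ := by
  have hlt : ∀ r ∈ Icc um up, (r * (1 - r) - J)⁻¹ < (r * (1 - r) - K)⁻¹ := by
    intro r hr
    have := min_le_flux hr
    exact inv_strictAnti₀ (by linarith) (by linarith)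
  exact intervalIntegral.integral_lt_integral_of_continuousOn_of_le_of_exists_lt h1
    (intervalIntegrable_flux_inv h1 (hJK.trans hK)).1 (intervalIntegrable_flux_inv h1 hK).1
    (fun r hr => (hlt r (Ioc_subset_Icc_self hr)).le)
    ⟨um, left_mem_Icc.2 h1.le, hlt um (left_mem_Icc.2 h1.le)⟩

lemma integral_flux_inv_continuousOn {um up K : ℝ} (h1 : um < up)
    (hK : K < min (um * (1 - um)) (up * (1 - up))) :
    ContinuousOn (fun J : ℝ => ∫ r in um..up, (r * (1 - r) - J)⁻¹) (Iic K) := by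
  -- Truncating the denominator from below makes the integrand jointly continuous on the whole
  -- plane, and changes nothing for `J ≤ K`.
  set d := min (um * (1 - um)) (up * (1 - up)) - K with hd
  have hd0 : 0 < d := by linarith
  have hc : Continuous (fun J : ℝ => ∫ r in um..up, (max (r * (1 - r) - J) d)⁻¹) := by
    apply intervalIntegral.continuous_parametric_intervalIntegral_of_continuous'
    apply Continuous.inv₀ (by fun_prop)
    intro p
    exact (lt_max_of_lt_right hd0).ne'
  refine hc.continuousOn.congr ?_
  intro J hJ
  refine intervalIntegral.integral_congr ?_
  intro r hr
  rw [uIcc_of_le h1.le] at hr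
  have := min_le_flux hr
  have hJ' : J ≤ K := hJ
  simp only
  rw [max_eq_left (by linarith)]

lemma integral_flux_inv_le {um up J : ℝ} (h1 : um < up)
    (hJ : J < min (um * (1 - um)) (up * (1 - up))) :
    (∫ r in um..up, (r * (1 - r) - J)⁻¹) ≤
      (up - um) * (min (um * (1 - um)) (up * (1 - up)) - J)⁻¹ := by
  have := intervalIntegral.integral_mono_on h1.le (intervalIntegrable_flux_inv h1 hJ).2
    (intervalIntegrable_const (c := (min (um * (1 - um)) (up * (1 - up)) - J)⁻¹))
    (fun r hr => inv_anti₀ (by linarith) (by linarith [min_le_flux hr]))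
  simpa using this

/-- Logarithmic blow-up of the integral as `J` approaches the minimum of the flux at the
endpoints. -/
lemma log_le_integral_flux_inv {um up e : ℝ} (h0 : 0 < um) (h1 : um < up) (h2 : up < 1)
    (he : 0 < e) :
    Real.log ((up - um + e) / e) ≤
      ∫ r in um..up, (r * (1 - r) - (min (um * (1 - um)) (up * (1 - up)) - e))⁻¹ := by
  have hI := (intervalIntegrable_flux_inv h1
    (J := min (um * (1 - um)) (up * (1 - up)) - e) (by linarith)).2
  rcases le_total (um * (1 - um)) (up * (1 - up)) with h | h
  · have hE : (∫ r in um..up, (r - (um - e))⁻¹) = Real.log ((up - um + e) / e) := by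
      rw [intervalIntegral.integral_comp_sub_right (fun x => x⁻¹),
        integral_inv_of_pos (by linarith) (by linarith)]
      congr 1
      ring
    rw [← hE]
    refine intervalIntegral.integral_mono_on h1.le ?_ hI ?_
    · refine ContinuousOn.intervalIntegrable_of_Icc h1.le (ContinuousOn.inv₀ (by fun_prop) ?_)
      intro r hr
      exact (by linarith [hr.1] : 0 < r - (um - e)).ne'
    · intro r hr
      have := min_le_flux hr
      refine inv_anti₀ (by linarith) ?_
      rw [min_eq_left h]
      nlinarith [mul_nonneg (sub_nonneg.2 hr.1) (by linarith [hr.1] : 0 ≤ r + um)]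
  · have hE : (∫ r in um..up, ((up + e) - r)⁻¹) = Real.log ((up - um + e) / e) := by
      rw [intervalIntegral.integral_comp_sub_left (fun x => x⁻¹),
        integral_inv_of_pos (by linarith) (by linarith)]
      congr 1
      ring
    rw [← hE]
    refine intervalIntegral.integral_mono_on h1.le ?_ hI ?_
    · refine ContinuousOn.intervalIntegrable_of_Icc h1.le (ContinuousOn.inv₀ (by fun_prop) ?_)
      intro r hr
      exact (by linarith [hr.2] : 0 < up + e - r).ne'
    · intro r hr
      have := min_le_flux hr
      refine inv_anti₀ (by linarith) ?_
      rw [min_eq_right h]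
      nlinarith [mul_nonneg (sub_nonneg.2 hr.2) (by linarith [hr.2] : 0 ≤ 2 - r - up)]

/-- `r ↦ log (r / (1 - r))` is a primitive of `1 / (r(1-r))`. -/
lemma integral_flux_inv_zero {um up : ℝ} (h0 : 0 < um) (h1 : um < up) (h2 : up < 1) :
    (∫ r in um..up, (r * (1 - r) - 0)⁻¹) =
      Real.log (up / (1 - up)) - Real.log (um / (1 - um)) := by
  have hm : 0 < min (um * (1 - um)) (up * (1 - up)) :=
    lt_min (mul_pos h0 (by linarith)) (mul_pos (by linarith) (by linarith))
  refine intervalIntegral.integral_eq_sub_of_hasDerivAt (f := fun r => Real.log (r / (1 - r)))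
    ?_ (intervalIntegrable_flux_inv h1 hm).2
  intro r hr
  rw [uIcc_of_le h1.le] at hr
  have hr0 : r ≠ 0 := (h0.trans_le hr.1).ne'
  have hr1 : 1 - r ≠ 0 := (by linarith [hr.2] : 0 < 1 - r).ne'
  have := ((hasDerivAt_id' r).fun_div ((hasDerivAt_id' r).const_sub 1) hr1).log
    (div_ne_zero hr0 hr1)
  refine this.congr_deriv ?_
  rw [sub_zero]
  field_simp
  ring

/-- For `0 < u₋ < u₊ < 1` and `b - a > 0` there is a unique constant
`J < min (u₋(1-u₋)) (u₊(1-u₊))` with `∫_{u₋}^{u₊} dr/(r(1-r)-J) = b-a`; moreover any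
such `J` satisfies `J < 1/4`, and `J > 0` provided
`b - a > log(u₊/(1-u₊)) - log(u₋/(1-u₋))`. -/
theorem stmt_1 (um up a b : ℝ) (h0 : 0 < um) (h1 : um < up) (h2 : up < 1) (hab : a < b) :
    (∃! J : ℝ, J < min (um * (1 - um)) (up * (1 - up)) ∧
      (∫ r in um..up, (r * (1 - r) - J)⁻¹) = b - a) ∧
    (∀ J : ℝ, J < min (um * (1 - um)) (up * (1 - up)) →
      (∫ r in um..up, (r * (1 - r) - J)⁻¹) = b - a →
      J < 1/4 ∧
        (b - a > Real.log (up / (1 - up)) - Real.log (um / (1 - um)) → 0 < J)) := by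
  set m := min (um * (1 - um)) (up * (1 - up)) with hm
  set F : ℝ → ℝ := fun J => ∫ r in um..up, (r * (1 - r) - J)⁻¹ with hF
  have hL : 0 < up - um := sub_pos.2 h1
  have hT : 0 < b - a := sub_pos.2 hab
  have hm0 : 0 < m := lt_min (mul_pos h0 (by linarith)) (mul_pos (by linarith) (by linarith))
  refine ⟨?_, ?_⟩
  · set e := (up - um) * Real.exp (-(b - a)) with he
    have he0 : 0 < e := mul_pos hL (Real.exp_pos _)
    have hlow : F (m - (up - um) / (b - a)) ≤ b - a := by
      have hd : 0 < (up - um) / (b - a) := div_pos hL hT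
      refine (integral_flux_inv_le h1 (by linarith)).trans (le_of_eq ?_)
      rw [← hm, sub_sub_cancel]
      field_simp
    have hhigh : b - a ≤ F (m - e) := by
      refine le_trans ?_ (log_le_integral_flux_inv h0 h1 h2 he0)
      rw [Real.le_log_iff_exp_le (by positivity), le_div_iff₀ he0]
      have : Real.exp (b - a) * e = up - um := by
        rw [he, mul_left_comm, ← Real.exp_add, add_neg_cancel, Real.exp_zero, mul_one]
      linarith
    have hle : m - (up - um) / (b - a) ≤ m - e := by
      have : e ≤ (up - um) / (b - a) := by
        rw [he, Real.exp_neg, div_eq_mul_inv]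
        gcongr
        linarith [Real.add_one_le_exp (b - a)]
      linarith
    have hcont : ContinuousOn F (Icc (m - (up - um) / (b - a)) (m - e)) :=
      (integral_flux_inv_continuousOn h1 (by linarith)).mono Icc_subset_Iic_self
    obtain ⟨J, hJ, hJT⟩ := intermediate_value_Icc hle hcont ⟨hlow, hhigh⟩
    refine ⟨J, ⟨by linarith [hJ.2], hJT⟩, ?_⟩
    rintro K ⟨hK, hKT⟩
    have hJm : J < m := by linarith [hJ.2]
    have hJT' : (∫ r in um..up, (r * (1 - r) - J)⁻¹) = b - a := hJT
    rcases lt_trichotomy K J with h | h | h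
    · linarith [integral_flux_inv_lt h1 h hJm]
    · exact h
    · linarith [integral_flux_inv_lt h1 h hK]
  · intro J hJ hJT
    refine ⟨?_, ?_⟩
    · have : m ≤ um * (1 - um) := min_le_left _ _
      nlinarith [sq_nonneg (um - 1 / 2)]
    · intro hlog
      by_contra! hJ0
      have h := integral_flux_inv_zero h0 h1 h2
      rcases hJ0.lt_or_eq with h3 | h3
      · linarith [integral_flux_inv_lt h1 h3 hm0]
      · rw [h3] at hJT
        linarith
end

section
/- Let φ_- < φ_+ be real numbers. For each γ>0 there exists a constant C_γ(φ_-,φ_+) ∈ (0,+∞), with C_γ(φ_-,φ_+) → 0 as φ_+−φ_- → 0, such that for every absolutely continuous φ:[0,∞)→ℝ with 0 ≤ φ' ≤ 1 a.e., φ(0)=φ_- and lim_{x→∞}φ(x)=φ_+, one has ∫_0^∞ |s(φ'(x))| dx ≤ γ‖φ−φ_+‖_{L¹(ℝ_+)} + C_γ(φ_-,φ_+). -/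
/-!
Write `p = deriv φ` and `ψ = φ₊ - φ ≥ 0`. The idea is a Fenchel-type bound for the Bernoulli entropy
with a multiplier depending on `ψ`: for every `q > 0`,
by `log t ≤ t - 1`,
`|s(p)| ≤ q - p log q`, hence, as `-log q ≤ 2 / √q`, also `|s(p)| ≤ q + 2 p / √q`
(`abs_S_le`). For `q = γ ψ(x)` the first term integrates to `γ ‖φ - φ₊‖`, while the second is the
derivative of the monotone function `f = -(4/√γ) √ψ` (`integrand_le`). The integral of the
derivative of a monotone function is at most the length of an interval containing its range
(`lintegral_deriv_le`), which for `f` is `4 √(φ₊ - φ₋) / √γ`; this is the constant `C_γ`.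
Where `ψ = 0` the function `φ` is maximal, so `deriv φ = 0` and there is nothing to bound.
-/

open MeasureTheory Real Filter Topology Set
open scoped Classical

noncomputable section

/-- Bernoulli entropy `s(p) = p log p + (1-p) log (1-p)` (with `0 log 0 = 0`). -/
def S (p : ℝ) : ℝ := p * Real.log p + (1 - p) * Real.log (1 - p)

/-- The integrand `g(u,φ,p) = s(u) + s(p) + (1-u)φ - log(1+e^φ)`. -/
def gg (u φ p : ℝ) : ℝ := S u + S p + (1 - u) * φ - Real.log (1 + Real.exp φ)

/-- The chemical potential `s'(v) = log (v/(1-v))`. -/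
def phiOf (v : ℝ) : ℝ := Real.log (v / (1 - v))

/-- The step function `θ_{a₋,a₊}`. -/
def theta (am ap x : ℝ) : ℝ := if x < 0 then am else ap

/-- Translation by `z`: `(τ_z f)(x) = f(x-z)`. -/
def tau (z : ℝ) (f : ℝ → ℝ) : ℝ → ℝ := fun x => f (x - z)

/-- Membership in `L^∞(ℝ;[0,1])`. -/
def MemU (u : ℝ → ℝ) : Prop := Measurable u ∧ ∀ x, u x ∈ Icc (0:ℝ) 1

/-- Membership in `L^∞(ℝ₊;[0,1])`. -/
def MemUplus (u : ℝ → ℝ) : Prop := Measurable u ∧ ∀ x, 0 ≤ x → u x ∈ Icc (0:ℝ) 1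

/-- The class `C`: absolutely continuous with `0 ≤ φ' ≤ 1` a.e. (equivalently nondecreasing
and 1-Lipschitz) with limits `pm` at `-∞` and `pp` at `+∞`. -/
def MemC (pm pp : ℝ) (φ : ℝ → ℝ) : Prop :=
  (∀ x y : ℝ, x ≤ y → φ x ≤ φ y ∧ φ y - φ x ≤ y - x) ∧
  Tendsto φ atBot (𝓝 pm) ∧ Tendsto φ atTop (𝓝 pp)

/-- The class `C⁺` on the half line. -/
def MemCplus (pm pp : ℝ) (φ : ℝ → ℝ) : Prop :=
  (∀ x y : ℝ, 0 ≤ x → x ≤ y → φ x ≤ φ y ∧ φ y - φ x ≤ y - x) ∧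
  φ 0 = pm ∧ Tendsto φ atTop (𝓝 pp)

/-- Membership in `X = L^∞(ℝ;[0,1]) × C`. -/
def MemX (um up : ℝ) (u φ : ℝ → ℝ) : Prop := MemU u ∧ MemC (phiOf um) (phiOf up) φ

/-- Membership in `X⁺ = L^∞(ℝ₊;[0,1]) × C⁺`. -/
def MemXplus (um up : ℝ) (u φ : ℝ → ℝ) : Prop :=
  MemUplus u ∧ MemCplus (phiOf um) (phiOf up) φ

/-- The finite volume functional `G_ℓ` on the symmetric interval `(-ℓ,ℓ)`. -/
def Gl (um up l : ℝ) (u φ : ℝ → ℝ) : EReal :=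
  if (∀ x ≤ -l, u x = um ∧ φ x = phiOf um) ∧ (∀ x, l ≤ x → u x = up ∧ φ x = phiOf up) then
    (↑(∫ x in Ioo (-l) l, (gg (u x) (φ x) (deriv φ x) - gg up (phiOf up) 0)) : EReal)
  else ⊤

/-- The finite volume functional `G_ℓ⁺` on `(0,ℓ)`. -/
def Glplus (um up l : ℝ) (u φ : ℝ → ℝ) : EReal :=
  if (∀ x, l ≤ x → u x = up ∧ φ x = phiOf up) then
    (↑(∫ x in Ioo (0:ℝ) l, (gg (u x) (φ x) (deriv φ x) - gg up (phiOf up) 0)) : EReal)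
  else ⊤

/-- The infinite volume functional `G` on the whole line, `+∞` off its domain `D`. -/
def GE (um up : ℝ) (u φ : ℝ → ℝ) : EReal :=
  if Integrable (fun x => (u x - theta um up x)^2) volume ∧
      Integrable (fun x => φ x - theta (phiOf um) (phiOf up) x) volume then
    (↑(∫ x, (gg (u x) (φ x) (deriv φ x) - gg up (phiOf up) 0)) : EReal)
  else ⊤

/-- The infinite volume functional `G⁺` on the half line, `+∞` off its domain `D⁺`. -/
def GEplus (um up : ℝ) (u φ : ℝ → ℝ) : EReal :=
  if IntegrableOn (fun x => (u x - up)^2) (Ioi 0) volume ∧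
      IntegrableOn (fun x => φ x - phiOf up) (Ioi 0) volume then
    (↑(∫ x in Ioi (0:ℝ), (gg (u x) (φ x) (deriv φ x) - gg up (phiOf up) 0)) : EReal)
  else ⊤

/-- Convergence of sequences in `X`: weak* in `L^∞(ℝ;[0,1])` and uniform for `φ`. -/
def ConvX (un φn : ℕ → ℝ → ℝ) (u φ : ℝ → ℝ) : Prop :=
  (∀ f : ℝ → ℝ, Integrable f volume →
    Tendsto (fun n => ∫ x, un n x * f x) atTop (𝓝 (∫ x, u x * f x))) ∧
  TendstoUniformly φn φ atTop

/-- Convergence of families indexed by `ℓ → ∞` in `X`. -/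
def ConvXFam (U Φ : ℝ → ℝ → ℝ) (u φ : ℝ → ℝ) : Prop :=
  (∀ f : ℝ → ℝ, Integrable f volume →
    Tendsto (fun l => ∫ x, U l x * f x) atTop (𝓝 (∫ x, u x * f x))) ∧
  TendstoUniformly Φ φ atTop

/-- Convergence of sequences in `X⁺`. -/
def ConvXplus (un φn : ℕ → ℝ → ℝ) (u φ : ℝ → ℝ) : Prop :=
  (∀ f : ℝ → ℝ, IntegrableOn f (Ioi 0) volume →
    Tendsto (fun n => ∫ x in Ioi (0:ℝ), un n x * f x) atTop
      (𝓝 (∫ x in Ioi (0:ℝ), u x * f x))) ∧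
  TendstoUniformlyOn φn φ atTop (Ici 0)

/-- Convergence of families indexed by `ℓ → ∞` in `X⁺`. -/
def ConvXplusFam (U Φ : ℝ → ℝ → ℝ) (u φ : ℝ → ℝ) : Prop :=
  (∀ f : ℝ → ℝ, IntegrableOn f (Ioi 0) volume →
    Tendsto (fun l => ∫ x in Ioi (0:ℝ), U l x * f x) atTop
      (𝓝 (∫ x in Ioi (0:ℝ), u x * f x))) ∧
  TendstoUniformlyOn Φ φ atTop (Ici 0)

/-- The standing wave `ū(x) = 1/2 + (u₊ - 1/2) tanh((u₊ - 1/2) x)`. -/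
def ubarStanding (up : ℝ) (x : ℝ) : ℝ :=
  1/2 + (up - 1/2) * Real.tanh ((up - 1/2) * x)


lemma S_zero : S 0 = 0 := by simp [S]

lemma abs_S_le {p q : ℝ} (hp0 : 0 ≤ p) (hp1 : p ≤ 1) (hq : 0 < q) :
    |S p| ≤ q + 2 * p / √q := by
  have hS : S p ≤ 0 := by
    have h1 := mul_nonpos_of_nonneg_of_nonpos hp0 (Real.log_nonpos hp0 hp1)
    have h2 := mul_nonpos_of_nonneg_of_nonpos (sub_nonneg.2 hp1)
      (Real.log_nonpos (sub_nonneg.2 hp1) (by linarith))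
    unfold S; linarith
  rw [abs_of_nonpos hS]
  have h1 : -(p * Real.log p) ≤ q - p - p * Real.log q := by
    rcases hp0.eq_or_lt with rfl | hp
    · simpa using hq.le
    · have h := Real.log_le_sub_one_of_pos (div_pos hq hp)
      rw [Real.log_div hq.ne' hp.ne'] at h
      have := mul_le_mul_of_nonneg_left h hp0
      have e : p * (q / p - 1) = q - p := by field_simp
      linarith
  have h2 : -((1 - p) * Real.log (1 - p)) ≤ p := by
    have h := Real.one_sub_inv_le_log_of_pos (x := 1 - p)
    rcases hp1.eq_or_lt with rfl | hp
    · simp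
    · have h1p : 0 < 1 - p := by linarith
      have := mul_le_mul_of_nonneg_left (h h1p) h1p.le
      have e : (1 - p) * (1 - (1 - p)⁻¹) = -p := by field_simp; ring
      linarith
  have h3 : -Real.log q ≤ 2 / √q := by
    have hs := Real.sqrt_pos.2 hq
    have h := Real.log_le_sub_one_of_pos (inv_pos.2 hs)
    rw [Real.log_inv, Real.log_sqrt hq.le] at h
    rw [div_eq_mul_inv]; linarith
  have h4 := mul_le_mul_of_nonneg_left h3 hp0
  have e : p * (2 / √q) = 2 * p / √q := by ring
  unfold S; linarith

/-- The derivative of a bounded monotone function on the half line, with the junk value `0` at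
points of non-differentiability, integrates to at most its oscillation: on the set of
differentiability points its integral is the measure of the image. -/
lemma lintegral_deriv_le {f : ℝ → ℝ} {a b : ℝ} (hf : MonotoneOn f (Ioi 0))
    (hb : ∀ x, 0 < x → f x ∈ Icc a b) :
    ∫⁻ x in Ioi (0:ℝ), ENNReal.ofReal (deriv f x) ≤ ENNReal.ofReal (b - a) := by
  set D : Set ℝ := {x | DifferentiableAt ℝ f x} with hD
  have hDm : MeasurableSet D := measurableSet_of_differentiableAt ℝ f
  have hsm : MeasurableSet (Ioi (0:ℝ) ∩ D) := measurableSet_Ioi.inter hDm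
  have h1 : ∫⁻ x in Ioi (0:ℝ), ENNReal.ofReal (deriv f x)
      = ∫⁻ x in Ioi (0:ℝ) ∩ D, ENNReal.ofReal (deriv f x) := by
    rw [inter_comm, ← setLIntegral_indicator hDm]
    refine lintegral_congr fun x => ?_
    by_cases hx : x ∈ D
    · simp [hx]
    · simp [hx, deriv_zero_of_not_differentiableAt (show ¬ DifferentiableAt ℝ f x from hx)]
  rw [h1, lintegral_deriv_eq_volume_image_of_monotoneOn hsm
    (fun x hx => hx.2.hasDerivAt.hasDerivWithinAt) (hf.mono inter_subset_left),
    ← Real.volume_Icc]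
  refine measure_mono ?_
  rintro _ ⟨x, hx, rfl⟩
  exact hb x hx.1

lemma MemCplus.le {pm pp : ℝ} {φ : ℝ → ℝ} (h : MemCplus pm pp φ) {x : ℝ} (hx : 0 ≤ x) :
    φ x ≤ pp :=
  ge_of_tendsto h.2.2 (eventually_atTop.2 ⟨x, fun y hy => (h.1 x y hx hy).1⟩)

lemma MemCplus.deriv_mem {pm pp : ℝ} {φ : ℝ → ℝ} (h : MemCplus pm pp φ) {x : ℝ} (hx : 0 < x) :
    0 ≤ deriv φ x ∧ deriv φ x ≤ 1 := by
  by_cases hd : DifferentiableAt ℝ φ x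
  swap
  · simp [deriv_zero_of_not_differentiableAt hd]
  have ht := hd.hasDerivAt.tendsto_slope.mono_left
    (nhdsWithin_mono x (fun y (hy : x < y) => hy.ne') : 𝓝[>] x ≤ 𝓝[≠] x)
  constructor
  · refine ge_of_tendsto ht ?_
    filter_upwards [self_mem_nhdsWithin] with y (hy : x < y)
    rw [slope_def_field]
    exact div_nonneg (sub_nonneg.2 (h.1 x y hx.le hy.le).1) (sub_nonneg.2 hy.le)
  · refine le_of_tendsto ht ?_
    filter_upwards [self_mem_nhdsWithin] with y (hy : x < y)
    rw [slope_def_field]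
    exact div_le_one_of_le₀ (h.1 x y hx.le hy.le).2 (sub_nonneg.2 hy.le)

/-- No differentiability is assumed: where `φ` is not differentiable, or has reached its limit `pp`,
the left side is `S 0 = 0`. -/
lemma integrand_le {γ pm pp : ℝ} (hγ : 0 < γ) {φ : ℝ → ℝ} (h : MemCplus pm pp φ) {x : ℝ}
    (hx : 0 < x) :
    ENNReal.ofReal |S (deriv φ x)| ≤
      ENNReal.ofReal (deriv (fun y => -(4 / √γ * √(pp - φ y))) x)
        + ENNReal.ofReal γ * ENNReal.ofReal (pp - φ x) := by
  by_cases hd : DifferentiableAt ℝ φ x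
  swap
  · simp [deriv_zero_of_not_differentiableAt hd, S_zero]
  rcases (h.le hx.le).eq_or_lt with he | hlt
  · have hm : IsLocalMax φ x := by
      filter_upwards [Ioi_mem_nhds hx] with y hy
      rw [he]; exact h.le (le_of_lt hy)
    simp [hm.deriv_eq_zero, S_zero]
  · have hψ : 0 < pp - φ x := sub_pos.2 hlt
    obtain ⟨h0, h1⟩ := h.deriv_mem hx
    have hder : deriv (fun y => -(4 / √γ * √(pp - φ y))) x
        = 2 * deriv φ x / √(γ * (pp - φ x)) := by
      have := (((hd.hasDerivAt.const_sub pp).sqrt hψ.ne').const_mul (4 / √γ)).neg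
      refine (this.congr_deriv ?_).deriv
      rw [Real.sqrt_mul hγ.le]
      have := Real.sqrt_pos.2 hγ
      have := Real.sqrt_pos.2 hψ
      field_simp
      ring
    rw [hder, ← ENNReal.ofReal_mul hγ.le, ← ENNReal.ofReal_add (by positivity) (by positivity)]
    refine ENNReal.ofReal_le_ofReal ?_
    have := abs_S_le h0 h1 (mul_pos hγ hψ)
    linarith

/-- For each `γ > 0` there is a constant `C_γ(φ₋,φ₊) ∈ (0,∞)`, tending to `0`
as `φ₊ - φ₋ → 0`, such that for every `φ ∈ C⁺`,
`∫_0^∞ |s(φ')| dx ≤ γ ‖φ - φ₊‖_{L¹(ℝ₊)} + C_γ(φ₋,φ₊)`. -/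
theorem stmt_3 (γ : ℝ) (hγ : 0 < γ) :
    ∃ Cf : ℝ → ℝ → ℝ,
      (∀ pm pp : ℝ, pm < pp → 0 < Cf pm pp) ∧
      (∀ ε > (0:ℝ), ∃ δ > (0:ℝ), ∀ pm pp : ℝ, pm < pp → pp - pm < δ → Cf pm pp < ε) ∧
      (∀ pm pp : ℝ, pm < pp → ∀ φ : ℝ → ℝ, MemCplus pm pp φ →
        (∫⁻ x in Ioi (0:ℝ), ENNReal.ofReal |S (deriv φ x)|) ≤
          ENNReal.ofReal γ * (∫⁻ x in Ioi (0:ℝ), ENNReal.ofReal (pp - φ x))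
            + ENNReal.ofReal (Cf pm pp)) := by
  have hsγ : 0 < √γ := Real.sqrt_pos.2 hγ
  refine ⟨fun pm pp => 4 / √γ * √(pp - pm), ?_, ?_, ?_⟩
  · intro pm pp hlt
    have := Real.sqrt_pos.2 (sub_pos.2 hlt)
    positivity
  · intro ε hε
    -- `4 / √γ * √δ = ε`
    refine ⟨(ε * √γ / 4) ^ 2, by positivity, fun pm pp hlt hδ => ?_⟩
    have h := (Real.sqrt_lt' (by positivity)).2 hδ
    calc 4 / √γ * √(pp - pm) < 4 / √γ * (ε * √γ / 4) := by gcongr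
      _ = ε := by field_simp
  · intro pm pp hlt φ h
    set f : ℝ → ℝ := fun y => -(4 / √γ * √(pp - φ y)) with hf
    have hmono : MonotoneOn f (Ioi 0) := by
      intro x hx y _ hxy
      have := (h.1 x y (le_of_lt hx) hxy).1
      simp only [hf]
      gcongr
    have hbd : ∀ x, 0 < x → f x ∈ Icc (-(4 / √γ * √(pp - pm))) 0 := by
      intro x hx
      have h0 : pm ≤ φ x := h.2.1 ▸ (h.1 0 x le_rfl hx.le).1
      refine ⟨?_, neg_nonpos.2 (by positivity)⟩
      simp only [hf]
      gcongr
    have hI := lintegral_deriv_le hmono hbd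
    rw [zero_sub, neg_neg] at hI
    calc ∫⁻ x in Ioi (0:ℝ), ENNReal.ofReal |S (deriv φ x)|
        ≤ ∫⁻ x in Ioi (0:ℝ), (ENNReal.ofReal (deriv f x)
            + ENNReal.ofReal γ * ENNReal.ofReal (pp - φ x)) :=
          setLIntegral_mono' measurableSet_Ioi fun x hx => integrand_le hγ h hx
      _ = (∫⁻ x in Ioi (0:ℝ), ENNReal.ofReal (deriv f x))
            + ENNReal.ofReal γ * ∫⁻ x in Ioi (0:ℝ), ENNReal.ofReal (pp - φ x) := by
          rw [lintegral_add_left (measurable_deriv f).ennreal_ofReal,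
            lintegral_const_mul' _ _ ENNReal.ofReal_ne_top]
      _ ≤ _ := by
          rw [add_comm]
          gcongr

end
end

section
/- Let φ_- < φ_+ and let φ:[0,∞)→ℝ be absolutely continuous with 0 ≤ φ' ≤ 1 a.e., φ(0)=φ_- and lim_{x→∞}φ(x)=φ_+. Then ‖φ−φ_+‖_{L¹(ℝ_+)} = ∫_0^∞ φ'(x)·x dx, and for every δ ∈ (0,1), letting A_δ^c := {x ≥ 0 : φ'(x) > δ}, the Lebesgue measure |A_δ^c| satisfies |A_δ^c|² ≤ (2/δ)‖φ−φ_+‖_{L¹(ℝ_+)}. -/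
/-!
Write `F = φ'` on `(0,∞)`, which is nonnegative because `φ` is nondecreasing, and let `μ` be the
measure with density `F`. As `φ` is Lipschitz, hence absolutely continuous, the fundamental theorem
of calculus gives `μ (x,y] = φ y - φ x`, and letting `y → ∞`, `μ (x,∞) = φ₊ - φ x`
(`slopeMeasure_Ioi`). The identity is then the layer-cake formula `∫ x dμ = ∫₀^∞ μ (t,∞) dt`.

For the bound, a set `A ⊆ [0,∞)` satisfies `|A|² ≤ 2 ∫_A x dx` (`sq_volume_le`): the square `A × A`
is covered by its parts below and above the diagonal; sliced by fixing the larger coordinate `y`, each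
part has slices contained in `[0,y]`. On `A = {φ' > δ}` one has `x ≤ δ⁻¹ φ'(x) x`, and the identity finishes the proof.
-/

open MeasureTheory Real Filter Topology Set
open scoped Classical

noncomputable section

/-- `A × A` is split along the diagonal, and each part is sliced by fixing the larger coordinate `y`,
so that the slices lie in `[0,y]`; this needs no finiteness of `|A|`. -/
lemma sq_volume_le (A : Set ℝ) (hA : MeasurableSet A) (h0 : ∀ x ∈ A, 0 ≤ x) :
    volume A * volume A ≤ 2 * ∫⁻ x in A, ENNReal.ofReal x := by
  set ν : Measure ℝ := volume.restrict A with hν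
  have hslice : ∀ y, ν (Iic y) ≤ ENNReal.ofReal y := by
    intro y
    rw [hν, Measure.restrict_apply measurableSet_Iic]
    calc volume (Iic y ∩ A) ≤ volume (Icc 0 y) := measure_mono fun z hz => ⟨h0 z hz.2, hz.1⟩
      _ = ENNReal.ofReal y := by simp
  have h1 : (ν.prod ν) {p : ℝ × ℝ | p.2 ≤ p.1} ≤ ∫⁻ x, ENNReal.ofReal x ∂ν := by
    rw [Measure.prod_apply (measurableSet_le measurable_snd measurable_fst)]
    exact lintegral_mono fun y => hslice y
  have h2 : (ν.prod ν) {p : ℝ × ℝ | p.1 ≤ p.2} ≤ ∫⁻ x, ENNReal.ofReal x ∂ν := by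
    rw [Measure.prod_apply_symm (measurableSet_le measurable_fst measurable_snd)]
    exact lintegral_mono fun y => hslice y
  calc volume A * volume A = (ν.prod ν) univ := by
        rw [← univ_prod_univ, Measure.prod_prod]; simp [hν]
    _ ≤ (ν.prod ν) ({p : ℝ × ℝ | p.2 ≤ p.1} ∪ {p : ℝ × ℝ | p.1 ≤ p.2}) :=
        measure_mono fun p _ => le_total p.2 p.1
    _ ≤ _ := measure_union_le _ _
    _ ≤ _ := add_le_add h1 h2
    _ = _ := (two_mul _).symm

lemma MemCplus.deriv_nonneg {pm pp : ℝ} {φ : ℝ → ℝ} (hφ : MemCplus pm pp φ) {x : ℝ} (hx : 0 < x) :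
    0 ≤ deriv φ x := by
  have hm : MonotoneOn φ (Ioi 0) := fun a ha b _ hab => (hφ.1 a b (le_of_lt ha) hab).1
  rw [← derivWithin_of_isOpen isOpen_Ioi (mem_Ioi.2 hx)]
  exact hm.derivWithin_nonneg

lemma MemCplus.absolutelyContinuous {pm pp : ℝ} {φ : ℝ → ℝ} (hφ : MemCplus pm pp φ) {x y : ℝ}
    (hx : 0 ≤ x) (hxy : x ≤ y) : AbsolutelyContinuousOnInterval φ x y := by
  refine LipschitzOnWith.absolutelyContinuousOnInterval (K := 1) ?_
  rw [uIcc_of_le hxy]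
  refine LipschitzOnWith.of_le_add_mul 1 fun a ha b hb => ?_
  rw [Real.dist_eq, NNReal.coe_one, one_mul]
  rcases le_total a b with hab | hab
  · linarith [(hφ.1 a b (hx.trans ha.1) hab).1, abs_nonneg (a - b)]
  · linarith [(hφ.1 b a (hx.trans hb.1) hab).2, le_abs_self (a - b)]

/-- The measure `φ'(x) dx` on `(0,∞)`; the positive part in `ENNReal.ofReal` is harmless for
nondecreasing `φ`. -/
def slopeMeasure (φ : ℝ → ℝ) : Measure ℝ :=
  (volume.restrict (Ioi 0)).withDensity fun x => ENNReal.ofReal (deriv φ x)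

lemma slopeMeasure_Ioc {pm pp : ℝ} {φ : ℝ → ℝ} (hφ : MemCplus pm pp φ) {x y : ℝ}
    (hx : 0 ≤ x) (hxy : x ≤ y) : slopeMeasure φ (Ioc x y) = ENNReal.ofReal (φ y - φ x) := by
  have hac := hφ.absolutelyContinuous hx hxy
  have hint : IntegrableOn (deriv φ) (Ioc x y) volume :=
    (intervalIntegrable_iff_integrableOn_Ioc_of_le hxy).1 hac.intervalIntegrable_deriv
  rw [← hac.integral_deriv_eq_sub, intervalIntegral.integral_of_le hxy,
    ofReal_integral_eq_lintegral_ofReal hint, slopeMeasure, withDensity_apply _ measurableSet_Ioc,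
    Measure.restrict_restrict measurableSet_Ioc, inter_eq_left.2]
  · exact fun z hz => hx.trans_lt hz.1
  · filter_upwards [ae_restrict_mem measurableSet_Ioc] with z hz
    exact hφ.deriv_nonneg (hx.trans_lt hz.1)

lemma slopeMeasure_Ioi {pm pp : ℝ} {φ : ℝ → ℝ} (hφ : MemCplus pm pp φ) {x : ℝ} (hx : 0 ≤ x) :
    slopeMeasure φ (Ioi x) = ENNReal.ofReal (pp - φ x) := by
  have h1 : Tendsto (fun y => slopeMeasure φ (Ioc x y)) atTop (𝓝 (slopeMeasure φ (Ioi x))) := by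
    rw [← iUnion_Ioc_right]
    exact tendsto_measure_iUnion_atTop (antitone_const.Ioc monotone_id)
  refine tendsto_nhds_unique h1 ?_
  refine (ENNReal.tendsto_ofReal (hφ.2.2.sub_const (φ x))).congr' ?_
  filter_upwards [eventually_ge_atTop x] with y hy
  exact (slopeMeasure_Ioc hφ hx hy).symm

/-- The layer-cake formula applied to `x ↦ x` and the measure `φ'(x) dx`. -/
lemma lintegral_gap_eq {pm pp : ℝ} {φ : ℝ → ℝ} (hφ : MemCplus pm pp φ) :
    (∫⁻ x in Ioi (0:ℝ), ENNReal.ofReal (pp - φ x))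
      = ∫⁻ x in Ioi (0:ℝ), ENNReal.ofReal (deriv φ x * x) := by
  have hmeas : Measurable fun x => ENNReal.ofReal (deriv φ x) := (measurable_deriv φ).ennreal_ofReal
  have hnn : 0 ≤ᵐ[slopeMeasure φ] (fun x : ℝ => x) :=
    (withDensity_absolutelyContinuous _ _).ae_le <| by
      filter_upwards [ae_restrict_mem measurableSet_Ioi] with x hx
      exact le_of_lt hx
  have hlc := lintegral_eq_lintegral_meas_lt (slopeMeasure φ) hnn aemeasurable_id'
  calc _ = ∫⁻ t in Ioi (0:ℝ), slopeMeasure φ {a | t < a} :=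
        setLIntegral_congr_fun measurableSet_Ioi fun t ht =>
          (slopeMeasure_Ioi hφ (le_of_lt ht)).symm
    _ = ∫⁻ x, ENNReal.ofReal x ∂(slopeMeasure φ) := hlc.symm
    _ = ∫⁻ x in Ioi (0:ℝ), ENNReal.ofReal (deriv φ x) * ENNReal.ofReal x :=
        lintegral_withDensity_eq_lintegral_mul _ hmeas ENNReal.measurable_ofReal
    _ = _ := setLIntegral_congr_fun measurableSet_Ioi fun x hx =>
        (ENNReal.ofReal_mul (hφ.deriv_nonneg hx)).symm

/-- For `φ ∈ C⁺` one has
`‖φ - φ₊‖_{L¹(ℝ₊)} = ∫_0^∞ φ'(x)·x dx`, and for `δ ∈ (0,1)`, with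
`A_δᶜ = {x ≥ 0 : φ'(x) > δ}`, `|A_δᶜ|² ≤ (2/δ) ‖φ - φ₊‖_{L¹(ℝ₊)}`. -/
theorem stmt_4 (pm pp : ℝ) (h : pm < pp) (φ : ℝ → ℝ) (hφ : MemCplus pm pp φ) :
    ((∫⁻ x in Ioi (0:ℝ), ENNReal.ofReal (pp - φ x))
      = ∫⁻ x in Ioi (0:ℝ), ENNReal.ofReal (deriv φ x * x)) ∧
    (∀ δ : ℝ, δ ∈ Ioo (0:ℝ) 1 →
      volume {x : ℝ | 0 ≤ x ∧ δ < deriv φ x} * volume {x : ℝ | 0 ≤ x ∧ δ < deriv φ x}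
        ≤ ENNReal.ofReal (2 / δ) * ∫⁻ x in Ioi (0:ℝ), ENNReal.ofReal (pp - φ x)) := by
  refine ⟨lintegral_gap_eq hφ, fun δ hδ => ?_⟩
  have hδ0 : 0 < δ := hδ.1
  set A : Set ℝ := {x : ℝ | 0 ≤ x ∧ δ < deriv φ x} with hA
  have hAm : MeasurableSet A :=
    measurableSet_Ici.inter (measurableSet_lt measurable_const (measurable_deriv φ))
  rw [lintegral_gap_eq hφ]
  calc volume A * volume A ≤ 2 * ∫⁻ x in A, ENNReal.ofReal x := sq_volume_le A hAm fun x hx => hx.1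
    _ ≤ 2 * ∫⁻ x in A, ENNReal.ofReal δ⁻¹ * ENNReal.ofReal (deriv φ x * x) := by
        gcongr 2 * ?_
        refine setLIntegral_mono' hAm fun x hx => ?_
        rw [← ENNReal.ofReal_mul (by positivity)]
        refine ENNReal.ofReal_le_ofReal ?_
        rw [inv_mul_eq_div, le_div_iff₀ hδ0, mul_comm]
        exact mul_le_mul_of_nonneg_right hx.2.le hx.1
    _ ≤ 2 * ∫⁻ x in Ici (0:ℝ), ENNReal.ofReal δ⁻¹ * ENNReal.ofReal (deriv φ x * x) := by
        gcongr 2 * ?_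
        exact lintegral_mono_set fun x hx => hx.1
    _ = ENNReal.ofReal (2 / δ) * ∫⁻ x in Ioi (0:ℝ), ENNReal.ofReal (deriv φ x * x) := by
        rw [setLIntegral_congr Ioi_ae_eq_Ici.symm, lintegral_const_mul' _ _ ENNReal.ofReal_ne_top,
          ← mul_assoc, div_eq_mul_inv, ENNReal.ofReal_mul zero_le_two, ENNReal.ofReal_ofNat]

end
end

section
/- Let 0<u_-<u_+<1 with u_-+u_+>1. The functional G^+ is lower semicontinuous and coercive on X^+, and its unique minimizer is (ū^+, φ̄^+), where ū^+ is the unique solution on ℝ_+ of u'' − (u(1−u))' = 0 with u(0)=u_- and lim_{x→+∞}u(x)=u_+, given explicitly by ū^+(x) = 1/2 + A^+ tanh(A^+(x−x^+)) with A^+ = |u_+ − 1/2| and x^+ determined by ū^+(0)=u_-, and φ̄^+ = s'(ū^+). -/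
/-!
With `v = sg φ = e^φ/(1+e^φ)`, the integrand of the functional splits (`gg_sub`) into

  `DD u φ + s(φ') + lam φ`,

where `DD` is the relative entropy of `u` with respect to `v`, and
`lam φ = log (v(1-v)) - log (u₊(1-u₊))` is concave and vanishes at `φ₊`. As `u₋ + u₊ > 1`, it is also
positive at `φ₋`, so it dominates a multiple of `φ₊ - φ` (`exists_lam_ge`). Only the entropy `s(φ')`
of the slope is negative.

*Lower semicontinuity and coercivity.* Young's inequality `-s(p) ≤ t p + p + e^{-1-t}` with `t = a x`
compensates `s(φ')` by `a x φ'`, which after an integration by parts costs `a (φ₊ - φ)`; for `a`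
small, the potential pays for it. So adding to the integrand terms whose total integral is a constant
makes it nonnegative (`NN`), and the functional is, up to this constant, the supremum over `L` of the
integrals `JJ` over `(0,L)` (`JJ_le_GEplus`, `exists_JJ_gt`); these suprema are infinite exactly off
the domain (`dom_of_bdd`). Each `JJ` is lower semicontinuous because `∫ s` is weakly-* so
(`entropy_lsc`) and uniform convergence of `φ` makes the slopes converge weakly-* (`weak_deriv`).
A bound on the functional bounds `L (φ₊ - φ(L))`, which controls the tails of `φ` uniformly; with
Helly's selection applied to `φ` and to the primitive of `u`, this gives compactness
(`GEplus_coercive`).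

*Minimizer.* The first-order equations are `u = sg φ` and `φ' = qq φ`, where
`qq φ = 1 - u₊(1-u₊)/(v(1-v))`. Subtracting the exact term `φ' s'(qq φ)` leaves the sum of two
relative entropies, `DD u φ` and that of `φ'` with respect to `qq φ`, which vanish on solutions of
these equations only (`MemXplus.calib`). The integral of the exact term up to the time where `φ`
reaches a height below `φ₊` depends on this height only, and all such heights are reached by every
competitor; letting the height tend to `φ₊` gives minimality (`calibration`). In case of equality
`φ' = qq φ` almost everywhere, and `φ` is determined because `qq` is Lipschitz (`ode_unique`). For
`u = sg φ` the equation `φ' = qq φ` becomes `u' = u(1-u) - u₊(1-u₊)`, solved by the hyperbolic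
tangent.
-/

open MeasureTheory Real Filter Topology Set
open scoped Classical

noncomputable section

/-! ### Pointwise inequalities -/

/-- The sigmoid `σ(φ) = e^φ/(1+e^φ)`, inverse of `phiOf`; it minimises `u ↦ gg u φ p`. -/
def sg (φ : ℝ) : ℝ := Real.exp φ / (1 + Real.exp φ)

/-- The relative entropy `s(u) - uφ + log(1+e^φ)` of the Bernoulli law of mean `u` with respect
to the one of mean `sg φ`. -/
def DD (u φ : ℝ) : ℝ := S u - u * φ + Real.log (1 + Real.exp φ)

/-- The potential `log (v(1-v)) - log (u₊(1-u₊))` with `v = sg φ`: what is left of the integrand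
`gg` once the relative entropy `DD` and the entropy of the slope are removed. -/
def lam (up φ : ℝ) : ℝ := φ - 2 * Real.log (1 + Real.exp φ) - Real.log (up * (1 - up))

lemma sg_pos (φ : ℝ) : 0 < sg φ := by unfold sg; positivity

lemma one_sub_sg (φ : ℝ) : 1 - sg φ = 1 / (1 + Real.exp φ) := by
  have := Real.exp_pos φ
  unfold sg; field_simp; ring

lemma sg_lt_one (φ : ℝ) : sg φ < 1 := by
  have := one_sub_sg φ
  have : 0 < 1 / (1 + Real.exp φ) := by positivity
  linarith

lemma log_sg (φ : ℝ) : Real.log (sg φ) = φ - Real.log (1 + Real.exp φ) := by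
  have := Real.exp_pos φ
  unfold sg; rw [Real.log_div (by positivity) (by positivity), Real.log_exp]

lemma log_one_sub_sg (φ : ℝ) : Real.log (1 - sg φ) = - Real.log (1 + Real.exp φ) := by
  rw [one_sub_sg, one_div, Real.log_inv]

lemma exp_phiOf {v : ℝ} (h0 : 0 < v) (h1 : v < 1) : Real.exp (phiOf v) = v / (1 - v) := by
  have : 0 < 1 - v := by linarith
  unfold phiOf; rw [Real.exp_log (by positivity)]

lemma sg_phiOf {v : ℝ} (h0 : 0 < v) (h1 : v < 1) : sg (phiOf v) = v := by
  have : 0 < 1 - v := by linarith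
  unfold sg; rw [exp_phiOf h0 h1]; field_simp; ring

lemma phiOf_sg (φ : ℝ) : phiOf (sg φ) = φ := by
  have h0 := sg_pos φ
  have h1 := sg_lt_one φ
  unfold phiOf
  rw [Real.log_div (by positivity) (by linarith), log_sg, log_one_sub_sg]; ring

lemma DD_eq (u φ : ℝ) :
    DD u φ = S u - u * Real.log (sg φ) - (1 - u) * Real.log (1 - sg φ) := by
  rw [log_sg, log_one_sub_sg]; unfold DD; ring

lemma lam_eq {up : ℝ} (φ : ℝ) :
    lam up φ = Real.log (sg φ * (1 - sg φ)) - Real.log (up * (1 - up)) := by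
  have h1 := sg_lt_one φ
  rw [Real.log_mul (sg_pos φ).ne' (by linarith), log_sg, log_one_sub_sg]; unfold lam; ring

lemma lam_phiOf {up v : ℝ} (h0 : 0 < v) (h1 : v < 1) :
    lam up (phiOf v) = Real.log (v * (1 - v)) - Real.log (up * (1 - up)) := by
  rw [lam_eq, sg_phiOf h0 h1]

lemma continuous_S : Continuous S := by
  unfold S
  exact Real.continuous_mul_log.add
    (Real.continuous_mul_log.comp (continuous_const.sub continuous_id))

lemma S_nonpos {p : ℝ} (h : p ∈ Icc (0:ℝ) 1) : S p ≤ 0 := by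
  have a := Real.mul_log_nonpos h.1 h.2
  have b := Real.mul_log_nonpos (x := 1 - p) (by linarith [h.2]) (by linarith [h.1])
  unfold S; linarith

lemma gg_sub {up : ℝ} (h0 : 0 < up) (h1 : up < 1) (u φ p : ℝ) :
    gg u φ p - gg up (phiOf up) 0 = DD u φ + S p + lam up φ := by
  have h2 : 0 < 1 - up := by linarith
  have e : 1 + Real.exp (phiOf up) = 1 / (1 - up) := by
    rw [exp_phiOf h0 h1]; field_simp; ring
  have e2 : phiOf up = Real.log up - Real.log (1 - up) := by
    unfold phiOf; rw [Real.log_div h0.ne' h2.ne']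
  have e3 : gg up (phiOf up) 0 = Real.log (up * (1 - up)) := by
    unfold gg; rw [e, one_div, Real.log_inv, S_zero, e2, Real.log_mul h0.ne' h2.ne']
    unfold S; ring
  rw [e3]; unfold gg DD lam; ring

lemma mul_log_sub_ge {u r : ℝ} (hu : 0 ≤ u) (hr : 0 < r) :
    2 * u - 2 * (√u * √r) ≤ u * Real.log u - u * Real.log r := by
  rcases hu.eq_or_lt with rfl | hu
  · simp
  have h1 := Real.sqrt_pos.2 hu
  have h2 := Real.sqrt_pos.2 hr
  have e1 := Real.sq_sqrt hu.le
  have e2 := Real.sq_sqrt hr.le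
  have h := Real.log_le_sub_one_of_pos (div_pos h2 h1)
  rw [Real.log_div h2.ne' h1.ne', Real.log_sqrt hu.le, Real.log_sqrt hr.le] at h
  have h3 : u * (√r / √u) = √u * √r := by
    nth_rw 1 [← e1]; field_simp
  nlinarith

lemma mul_log_sub_le {u r : ℝ} (hu : 0 ≤ u) (hr : 0 < r) :
    u * Real.log u - u * Real.log r ≤ u * (u / r - 1) := by
  rcases hu.eq_or_lt with rfl | hu
  · simp
  have h := Real.log_le_sub_one_of_pos (div_pos hu hr)
  rw [Real.log_div hu.ne' hr.ne'] at h
  nlinarith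

lemma sq_sub_le_sqrt {a b : ℝ} (ha : 0 ≤ a) (hb : 0 ≤ b) (ha1 : a ≤ 1) (hb1 : b ≤ 1) :
    (a - b) ^ 2 ≤ 4 * (a + b - 2 * (√a * √b)) := by
  have e1 := Real.sq_sqrt ha
  have e2 := Real.sq_sqrt hb
  have h1 : √a ≤ 1 := by simpa using Real.sqrt_le_sqrt ha1
  have h2 : √b ≤ 1 := by simpa using Real.sqrt_le_sqrt hb1
  have h3 := Real.sqrt_nonneg a
  have h4 := Real.sqrt_nonneg b
  have e : (a - b)^2 = (√a - √b)^2 * (√a + √b)^2 := by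
    rw [← mul_pow]; congr 1; nlinarith
  have e' : a + b - 2 * (√a * √b) = (√a - √b)^2 := by nlinarith
  rw [e, e']
  have : (√a + √b)^2 ≤ 4 := by nlinarith
  nlinarith [sq_nonneg (√a - √b)]

/-- A weak form of Pinsker's inequality for Bernoulli laws, through the Hellinger distance. -/
lemma gibbs {u r : ℝ} (hu : u ∈ Icc (0:ℝ) 1) (hr : 0 < r) (hr1 : r < 1) :
    (u - r) ^ 2 / 2 ≤ S u - u * Real.log r - (1 - u) * Real.log (1 - r) := by
  obtain ⟨hu0, hu1⟩ := hu
  have a := mul_log_sub_ge hu0 hr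
  have b := mul_log_sub_ge (u := 1 - u) (r := 1 - r) (by linarith) (by linarith)
  have c := sq_sub_le_sqrt hu0 hr.le hu1 hr1.le
  have d := sq_sub_le_sqrt (a := 1 - u) (b := 1 - r) (by linarith) (by linarith) (by linarith)
    (by linarith)
  unfold S
  nlinarith

lemma gibbs_upper {u r : ℝ} (hu : u ∈ Icc (0:ℝ) 1) (hr : 0 < r) (hr1 : r < 1) :
    S u - u * Real.log r - (1 - u) * Real.log (1 - r) ≤ (u - r) ^ 2 / (r * (1 - r)) := by
  obtain ⟨hu0, hu1⟩ := hu
  have a := mul_log_sub_le hu0 hr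
  have hr2 : 0 < 1 - r := by linarith
  have b := mul_log_sub_le (u := 1 - u) (r := 1 - r) (by linarith) hr2
  have e : (u - r) ^ 2 / (r * (1 - r)) = u * (u / r - 1) + (1 - u) * ((1 - u) / (1 - r) - 1) := by
    field_simp; ring
  rw [e]; unfold S; linarith

lemma DD_ge {u : ℝ} (hu : u ∈ Icc (0:ℝ) 1) (φ : ℝ) : (u - sg φ) ^ 2 / 2 ≤ DD u φ := by
  rw [DD_eq]; exact gibbs hu (sg_pos φ) (sg_lt_one φ)

lemma DD_nonneg {u : ℝ} (hu : u ∈ Icc (0:ℝ) 1) (φ : ℝ) : 0 ≤ DD u φ :=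
  le_trans (by positivity) (DD_ge hu φ)

lemma DD_le {u : ℝ} (hu : u ∈ Icc (0:ℝ) 1) (φ : ℝ) :
    DD u φ ≤ (u - sg φ) ^ 2 / (sg φ * (1 - sg φ)) := by
  rw [DD_eq]; exact gibbs_upper hu (sg_pos φ) (sg_lt_one φ)

lemma DD_sg (φ : ℝ) : DD (sg φ) φ = 0 := by
  rw [DD_eq]; unfold S; ring

/-- Young's inequality for the entropy: it trades `-s(p)` for the first moment `t p`. -/
lemma neg_S_le {p : ℝ} (hp : p ∈ Icc (0:ℝ) 1) (t : ℝ) :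
    - S p ≤ t * p + p + Real.exp (-1 - t) := by
  obtain ⟨h0, h1⟩ := hp
  have a : - (p * Real.log p) - t * p ≤ Real.exp (-1 - t) := by
    rcases h0.eq_or_lt with rfl | h0
    · simp; positivity
    have h := Real.log_le_sub_one_of_pos (div_pos (Real.exp_pos (-1 - t)) h0)
    rw [Real.log_div (by positivity) h0.ne', Real.log_exp] at h
    have e : p * (Real.exp (-1 - t) / p) = Real.exp (-1 - t) := by field_simp
    nlinarith
  have b : - ((1 - p) * Real.log (1 - p)) ≤ p := by
    rcases h1.eq_or_lt with rfl | h1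
    · simp
    have h3 : 0 < 1 - p := by linarith
    have h := Real.log_le_sub_one_of_pos (inv_pos.2 h3)
    rw [Real.log_inv] at h
    have e : (1 - p) * (1 - p)⁻¹ = 1 := by field_simp
    nlinarith
  unfold S; linarith

lemma hasDerivAt_log1pexp (x : ℝ) :
    HasDerivAt (fun x => Real.log (1 + Real.exp x)) (sg x) x := by
  have := ((Real.hasDerivAt_exp x).const_add 1).log (by positivity)
  simpa [sg] using this

lemma sg_mono : Monotone sg := by
  intro x y h
  unfold sg
  have := Real.exp_le_exp.2 h
  have := Real.exp_pos x
  rw [div_le_div_iff₀ (by positivity) (by positivity)]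
  nlinarith

lemma sg_lipschitz {x y : ℝ} (h : x ≤ y) : sg y - sg x ≤ y - x := by
  have e : ∀ x, sg x = 1 - 1 / (1 + Real.exp x) := fun x => by rw [← one_sub_sg]; ring
  have h1 : Real.exp x ≥ Real.exp y * (1 - (y - x)) := by
    have := Real.add_one_le_exp (x - y)
    have h2 : Real.exp x = Real.exp y * Real.exp (x - y) := by rw [← Real.exp_add]; ring_nf
    rw [h2]; nlinarith [Real.exp_pos y]
  have hx := Real.exp_pos x
  have hy := Real.exp_pos y
  rw [e, e]
  have : 1 - 1 / (1 + Real.exp y) - (1 - 1 / (1 + Real.exp x))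
    = (Real.exp y - Real.exp x) / ((1 + Real.exp x) * (1 + Real.exp y)) := by
    field_simp; ring
  rw [this, div_le_iff₀ (by positivity)]
  nlinarith [mul_pos hx hy, mul_nonneg (sub_nonneg.2 h) hx.le, mul_nonneg (sub_nonneg.2 h) hy.le, mul_nonneg (sub_nonneg.2 h) (mul_pos hx hy).le]

lemma concaveOn_lam (up : ℝ) : ConcaveOn ℝ univ (lam up) := by
  have h : ConvexOn ℝ univ (fun x => Real.log (1 + Real.exp x)) := by
    apply Monotone.convexOn_univ_of_deriv
    · exact fun x => (hasDerivAt_log1pexp x).differentiableAt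
    · have : deriv (fun x => Real.log (1 + Real.exp x)) = sg :=
        funext fun x => (hasDerivAt_log1pexp x).deriv
      rw [this]; exact sg_mono
  refine ⟨convex_univ, fun x _ y _ a b ha hb hab => ?_⟩
  have := h.2 (mem_univ x) (mem_univ y) ha hb hab
  simp only [smul_eq_mul] at this ⊢
  unfold lam
  have e : a * Real.log (up * (1 - up)) + b * Real.log (up * (1 - up)) = Real.log (up * (1 - up)) := by
    rw [← add_mul, hab, one_mul]
  linarith

lemma lam_le {up φ : ℝ} (h0 : 0 < up) (h1 : up < 1) (h : φ ≤ phiOf up) :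
    lam up φ ≤ phiOf up - φ := by
  have e : lam up (phiOf up) = 0 := by rw [lam_phiOf h0 h1]; ring
  have h2 : Real.log (1 + Real.exp (phiOf up)) ≤ phiOf up - φ + Real.log (1 + Real.exp φ) := by
    rw [← Real.log_exp (phiOf up - φ), ← Real.log_mul (by positivity) (by positivity)]
    apply Real.log_le_log (by positivity)
    have : 1 ≤ Real.exp (phiOf up - φ) := Real.one_le_exp (by linarith)
    rw [mul_add, ← Real.exp_add]; simp; linarith
  unfold lam at e ⊢
  linarith

lemma phiOf_lt {um up : ℝ} (h0 : 0 < um) (h1 : um < up) (h2 : up < 1) : phiOf um < phiOf up := by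
  unfold phiOf
  have : 0 < 1 - um := by linarith
  have : 0 < 1 - up := by linarith
  apply Real.log_lt_log (by positivity)
  rw [div_lt_div_iff₀ (by positivity) (by positivity)]
  nlinarith

/-- The potential grows at least linearly in the distance to `phiOf up`. It is concave in `φ` and
vanishes at `phiOf up`, so it lies above its chord; the condition `1 < um + up` says that it is
positive at `phiOf um`. -/
lemma exists_lam_ge {um up : ℝ} (h0 : 0 < um) (h1 : um < up) (h2 : up < 1) (hs : 1 < um + up) :
    ∃ δ > 0, ∀ φ ∈ Icc (phiOf um) (phiOf up), δ * (phiOf up - φ) ≤ lam up φ := by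
  have hlt := phiOf_lt h0 h1 h2
  have hd : 0 < phiOf up - phiOf um := by linarith
  have e : lam up (phiOf up) = 0 := by rw [lam_phiOf (by linarith) h2]; ring
  have hpos : 0 < lam up (phiOf um) := by
    rw [lam_phiOf h0 (by linarith), sub_pos]
    apply Real.log_lt_log (by nlinarith) (by nlinarith)
  refine ⟨lam up (phiOf um) / (phiOf up - phiOf um), by positivity, fun φ hφ => ?_⟩
  have ha : 0 ≤ (phiOf up - φ) / (phiOf up - phiOf um) := div_nonneg (by linarith [hφ.2]) hd.le
  have hb : 0 ≤ (φ - phiOf um) / (phiOf up - phiOf um) := div_nonneg (by linarith [hφ.1]) hd.le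
  have hab : (phiOf up - φ) / (phiOf up - phiOf um) + (φ - phiOf um) / (phiOf up - phiOf um) = 1 := by
    field_simp; ring
  have := (concaveOn_lam up).2 (mem_univ (phiOf um)) (mem_univ (phiOf up)) ha hb hab
  simp only [smul_eq_mul, e, mul_zero, add_zero] at this
  have e2 : (phiOf up - φ) / (phiOf up - phiOf um) * phiOf um
    + (φ - phiOf um) / (phiOf up - phiOf um) * phiOf up = φ := by field_simp; ring
  rw [e2] at this
  calc _ = _ := by ring
    _ ≤ _ := this

lemma continuous_sg : Continuous sg := by
  unfold sg
  exact Real.continuous_exp.div (by fun_prop) (fun x => by positivity)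

lemma continuous_l1e : Continuous fun x : ℝ => Real.log (1 + Real.exp x) :=
  continuous_iff_continuousAt.2 fun x => (hasDerivAt_log1pexp x).continuousAt

lemma continuous_lam (up : ℝ) : Continuous (lam up) := by
  unfold lam
  have := continuous_l1e
  fun_prop

/-! ### Monotone 1-Lipschitz functions on the half line -/

/-- Monotone and 1-Lipschitz on `[0,∞)`: the regularity shared by the elements of `C⁺` and by the
primitives of densities with values in `[0,1]`. -/
def M1 (f : ℝ → ℝ) : Prop := ∀ x y : ℝ, 0 ≤ x → x ≤ y → f x ≤ f y ∧ f y - f x ≤ y - x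

lemma M1.abs_le {f : ℝ → ℝ} (h : M1 f) {x y : ℝ} (hx : 0 ≤ x) (hy : 0 ≤ y) :
    |f x - f y| ≤ |x - y| := by
  rcases le_total x y with hxy | hxy
  · have := h x y hx hxy
    rw [abs_sub_comm, abs_sub_comm x y, abs_of_nonneg (by linarith), abs_of_nonneg (by linarith)]
    linarith
  · have := h y x hy hxy
    rw [abs_of_nonneg (by linarith), abs_of_nonneg (by linarith)]
    linarith

lemma M1.lipOn {f : ℝ → ℝ} (h : M1 f) : LipschitzOnWith 1 f (Ici 0) := by
  apply LipschitzOnWith.of_dist_le_mul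
  intro x hx y hy
  simpa [Real.dist_eq] using h.abs_le hx hy

lemma uIcc_subset_Ici {a b : ℝ} (ha : 0 ≤ a) (hb : 0 ≤ b) : uIcc a b ⊆ Ici 0 := by
  intro x hx
  exact le_trans (le_inf ha hb) hx.1

lemma M1.ac {f : ℝ → ℝ} (h : M1 f) {a b : ℝ} (ha : 0 ≤ a) (hb : 0 ≤ b) :
    AbsolutelyContinuousOnInterval f a b :=
  (h.lipOn.mono (uIcc_subset_Ici ha hb)).absolutelyContinuousOnInterval

lemma M1.cont {f : ℝ → ℝ} (h : M1 f) : ContinuousOn f (Ici 0) := h.lipOn.continuousOn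

lemma M1.deriv_mem {f : ℝ → ℝ} (h : M1 f) {x : ℝ} (hx : 0 < x) : deriv f x ∈ Icc (0:ℝ) 1 := by
  by_cases hd : DifferentiableAt ℝ f x
  swap
  · rw [deriv_zero_of_not_differentiableAt hd]; simp
  have ht := (hasDerivAt_iff_tendsto_slope.1 hd.hasDerivAt).mono_left
    (nhdsWithin_mono x (fun y (hy : y ∈ Ioi x) => ne_of_gt hy))
  have hs : ∀ᶠ y in 𝓝[>] x, slope f x y ∈ Icc (0:ℝ) 1 := by
    filter_upwards [self_mem_nhdsWithin] with y hy
    have hy : x < y := hy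
    have := h x y hx.le hy.le
    rw [slope_def_field]
    exact ⟨div_nonneg (by linarith) (by linarith), (div_le_one (by linarith)).2 this.2⟩
  exact isClosed_Icc.mem_of_tendsto ht hs

lemma M1.ae_diff {f : ℝ → ℝ} (h : M1 f) : ∀ᵐ x, 0 < x → DifferentiableAt ℝ f x := by
  filter_upwards [h.lipOn.ae_differentiableWithinAt_of_mem_real] with x hx h0
  exact (hx h0.le).differentiableAt (Ici_mem_nhds h0)

lemma M1.integral {f : ℝ → ℝ} (h : M1 f) {a b : ℝ} (ha : 0 ≤ a) (hb : 0 ≤ b) :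
    ∫ x in a..b, deriv f x = f b - f a := (h.ac ha hb).integral_deriv_eq_sub

/-- A function, measurable on the half line and bounded there by `C`, is integrable on every
bounded interval. -/
lemma intervalIntegrable_of_bdd {f : ℝ → ℝ} {C a b : ℝ} (ha : 0 ≤ a) (hb : 0 ≤ b)
    (hm : AEStronglyMeasurable f (volume.restrict (Ioi 0)))
    (hC : ∀ x, 0 < x → x ≤ max a b → |f x| ≤ C) :
    IntervalIntegrable f volume a b := by
  rw [intervalIntegrable_iff]
  have hsub : uIoc a b ⊆ Ioi 0 := fun x hx => lt_of_le_of_lt (le_inf ha hb) hx.1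
  refine IntegrableOn.of_bound (by simp [uIoc]) (hm.mono_set hsub) C ?_
  exact (ae_restrict_mem measurableSet_uIoc).mono fun x hx => hC x (hsub hx) hx.2

lemma M1.ii_deriv {f : ℝ → ℝ} (h : M1 f) {a b : ℝ} (ha : 0 ≤ a) (hb : 0 ≤ b) :
    IntervalIntegrable (deriv f) volume a b :=
  intervalIntegrable_of_bdd (C := 1) ha hb (measurable_deriv f).aestronglyMeasurable
    fun x hx _ => by rw [abs_of_nonneg (h.deriv_mem hx).1]; exact (h.deriv_mem hx).2

/-- Pointwise convergence forces the slopes to converge weakly-* in `L^∞(ℝ₊)`: this is integration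
by parts for smooth test functions, and density in `L¹`. -/
lemma weak_deriv {fn : ℕ → ℝ → ℝ} {f g : ℝ → ℝ} (hn : ∀ n, M1 (fn n)) (hf : M1 f)
    (hlim : ∀ x, 0 ≤ x → Tendsto (fun n => fn n x) atTop (𝓝 (f x)))
    (hg : IntegrableOn g (Ioi 0) volume) :
    Tendsto (fun n => ∫ x in Ioi (0:ℝ), deriv (fn n) x * g x) atTop
      (𝓝 (∫ x in Ioi (0:ℝ), deriv f x * g x)) := by
  -- smooth test functions
  have key : ∀ h : ℝ → ℝ, HasCompactSupport h → ContDiff ℝ 1 h →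
      Tendsto (fun n => ∫ x in Ioi (0:ℝ), deriv (fn n) x * h x) atTop
      (𝓝 (∫ x in Ioi (0:ℝ), deriv f x * h x)) := by
    intro h hc hd
    obtain ⟨R, hR0, hR⟩ : ∃ R > 0, ∀ x, R < x → h x = 0 := by
      obtain ⟨R, hR⟩ := hc.isCompact.bddAbove
      refine ⟨max R 1, by positivity, fun x hx => ?_⟩
      by_contra hne
      have := hR (subset_tsupport h hne)
      exact absurd hx (not_lt.2 (this.trans (le_max_left _ _)))
    have hac : AbsolutelyContinuousOnInterval h 0 R :=
      (hd.contDiffOn).absolutelyContinuousOnInterval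
    have red : ∀ k : ℝ → ℝ, M1 k → ∫ x in Ioi (0:ℝ), deriv k x * h x =
        k R * h R - k 0 * h 0 - ∫ x in (0:ℝ)..R, k x * deriv h x := by
      intro k hk
      have := (hac).integral_mul_deriv_eq_deriv_mul (hk.ac le_rfl hR0.le)
      have e : ∫ x in Ioi (0:ℝ), deriv k x * h x = ∫ x in (0:ℝ)..R, h x * deriv k x := by
        rw [intervalIntegral.integral_of_le hR0.le]
        symm
        simp_rw [mul_comm (h _)]
        rw [setIntegral_eq_of_subset_of_forall_sdiff_eq_zero measurableSet_Ioi
          (s := Ioc 0 R) (t := Ioi 0) (f := fun x => deriv k x * h x) Ioc_subset_Ioi_self]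
        · intro x hx
          have : R < x := by
            by_contra hle
            exact hx.2 ⟨hx.1, not_lt.1 hle⟩
          rw [hR x this, mul_zero]
      rw [e, this]
      simp_rw [mul_comm]
    rw [red f hf]
    simp_rw [fun n => red (fn n) (hn n)]
    refine (((hlim R hR0.le).mul_const _).sub ((hlim 0 le_rfl).mul_const _)).sub ?_
    obtain ⟨C, hC⟩ := ((hlim 0 le_rfl).norm).bddAbove_range
    have hdc : Continuous (deriv h) := hd.continuous_deriv le_rfl
    apply intervalIntegral.tendsto_integral_filter_of_dominated_convergence
      (fun x => (C + |x|) * ‖deriv h x‖)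
    · refine Eventually.of_forall fun n => ?_
      refine ContinuousOn.aestronglyMeasurable (ContinuousOn.mul ((hn n).cont.mono ?_)
        hdc.continuousOn) measurableSet_uIoc
      exact uIoc_subset_uIcc.trans (uIcc_subset_Ici le_rfl hR0.le)
    · refine Eventually.of_forall fun n => Eventually.of_forall fun x hx => ?_
      have hx0 : 0 ≤ x := uIcc_subset_Ici le_rfl hR0.le (uIoc_subset_uIcc hx)
      rw [norm_mul]
      gcongr
      have a := (hn n).abs_le hx0 le_rfl
      have b : ‖fn n 0‖ ≤ C := hC ⟨n, rfl⟩
      rw [Real.norm_eq_abs] at b ⊢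
      have c := abs_sub_abs_le_abs_sub (fn n x) (fn n 0)
      rw [sub_zero] at a
      linarith
    · apply Continuous.intervalIntegrable
      exact (continuous_const.add continuous_abs).mul hdc.norm
    · refine Eventually.of_forall fun x hx => ?_
      have hx0 : 0 ≤ x := uIcc_subset_Ici le_rfl hR0.le (uIoc_subset_uIcc hx)
      exact (hlim x hx0).mul_const _
  rw [Metric.tendsto_atTop]
  intro ε hε
  have hG : MemLp g 1 (volume.restrict (Ioi (0:ℝ))) := memLp_one_iff_integrable.2 hg
  obtain ⟨h, hc, hd, hh⟩ := hG.exist_eLpNorm_sub_le (by simp) le_rfl (ε := ε / 4) (by positivity)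
  have hhi : Integrable h (volume.restrict (Ioi (0:ℝ))) :=
    (hd.continuous.integrable_of_hasCompactSupport hc)
  have hgh : Integrable (g - h) (volume.restrict (Ioi (0:ℝ))) := hg.sub hhi
  have hgh' : ∫ x in Ioi (0:ℝ), ‖(g - h) x‖ ≤ ε / 4 := by
    rw [integral_norm_eq_lintegral_enorm hgh.1, ← eLpNorm_one_eq_lintegral_enorm]
    exact ENNReal.toReal_le_of_le_ofReal (by positivity) hh
  obtain ⟨N, hN⟩ := Metric.tendsto_atTop.1 (key h hc (hd.of_le (by simp))) (ε / 4) (by positivity)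
  -- each slope is bounded by one, so replacing `g` by `h` costs at most `ε / 4`
  have bd : ∀ k : ℝ → ℝ, M1 k → |(∫ x in Ioi (0:ℝ), deriv k x * g x) -
      ∫ x in Ioi (0:ℝ), deriv k x * h x| ≤ ε / 4 := by
    intro k hk
    have hb : ∀ᵐ x ∂(volume.restrict (Ioi (0:ℝ))), ‖deriv k x‖ ≤ 1 :=
      (ae_restrict_mem measurableSet_Ioi).mono fun x hx => by
        rw [Real.norm_eq_abs, abs_of_nonneg (hk.deriv_mem hx).1]; exact (hk.deriv_mem hx).2
    have hmk := (measurable_deriv k).aestronglyMeasurable (μ := volume.restrict (Ioi (0:ℝ)))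
    rw [← integral_sub (hg.bdd_mul hmk hb) (hhi.bdd_mul hmk hb), ← Real.norm_eq_abs]
    refine (norm_integral_le_of_norm_le hgh.norm ?_).trans hgh'
    filter_upwards [hb] with x hx
    rw [← mul_sub, norm_mul, Pi.sub_apply]
    nlinarith [norm_nonneg (g x - h x)]
  refine ⟨N, fun n hn' => ?_⟩
  have h1 := hN n hn'
  have h2 := bd f hf
  have h3 := bd _ (hn n)
  rw [Real.dist_eq] at h1 ⊢
  rw [abs_le] at h2 h3
  rw [abs_lt] at h1 ⊢
  constructor <;> linarith [h1.1, h1.2, h2.1, h2.2, h3.1, h3.2]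

/-- Helly selection, from a diagonal extraction along the rationals. -/
lemma helly {fn : ℕ → ℝ → ℝ} {c : ℝ} (hn : ∀ n, M1 (fn n)) (h0 : ∀ n, fn n 0 = c) :
    ∃ σ : ℕ → ℕ, StrictMono σ ∧ ∃ f : ℝ → ℝ, M1 f ∧
      ∀ x, 0 ≤ x → Tendsto (fun n => fn (σ n) x) atTop (𝓝 (f x)) := by
  have hK : IsCompact (Set.pi univ fun q : ℚ => Icc c (c + |(q:ℝ)|)) :=
    isCompact_univ_pi fun q => isCompact_Icc
  obtain ⟨a, -, σ, hσ, ha⟩ := hK.isSeqCompact (x := fun n (q : ℚ) => fn n |(q:ℝ)|) (by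
    intro n q _
    have := hn n 0 |(q:ℝ)| le_rfl (abs_nonneg _)
    rw [h0] at this
    exact ⟨this.1, by linarith⟩)
  have ha' : ∀ q : ℚ, Tendsto (fun n => fn (σ n) |(q:ℝ)|) atTop (𝓝 (a q)) := fun q =>
    (tendsto_pi_nhds.1 ha) q
  have hlim : ∀ x, 0 ≤ x → ∃ l, Tendsto (fun n => fn (σ n) x) atTop (𝓝 l) := by
    intro x hx
    apply cauchySeq_tendsto_of_complete
    rw [Metric.cauchySeq_iff']
    intro ε hε
    obtain ⟨q, hq1, hq2⟩ := exists_rat_btwn (show x < x + ε / 4 by linarith)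
    obtain ⟨N, hN⟩ := Metric.cauchySeq_iff'.1 (ha' q).cauchySeq (ε / 4) (by linarith)
    refine ⟨N, fun n hnN => ?_⟩
    have e : |(q:ℝ)| = q := abs_of_nonneg (by linarith)
    have h1 := hN n hnN
    rw [e, Real.dist_eq] at h1
    have h2 := (hn (σ n)) x q hx hq1.le
    have h3 := (hn (σ N)) x q hx hq1.le
    rw [Real.dist_eq]
    rw [abs_lt] at h1 ⊢
    constructor <;> linarith [h1.1, h1.2]
  choose! f hf using hlim
  refine ⟨σ, hσ, f, fun x y hx hxy => ⟨?_, ?_⟩, hf⟩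
  · exact le_of_tendsto_of_tendsto' (hf x hx) (hf y (hx.trans hxy))
      fun n => (hn _ x y hx hxy).1
  · exact le_of_tendsto' ((hf y (hx.trans hxy)).sub (hf x hx)) fun n => (hn _ x y hx hxy).2

/-- Equi-Lipschitz functions converging pointwise converge uniformly on `[0,∞)`, as soon as the
tails are uniformly small. -/
lemma uniform_of_pointwise {fn : ℕ → ℝ → ℝ} {f : ℝ → ℝ} (hn : ∀ n, M1 (fn n)) (hf : M1 f)
    (hlim : ∀ x, 0 ≤ x → Tendsto (fun n => fn n x) atTop (𝓝 (f x)))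
    (htail : ∀ ε > 0, ∃ M, ∀ n, ∀ x, M ≤ x → |fn n x - f x| < ε) :
    TendstoUniformlyOn fn f atTop (Ici 0) := by
  rw [Metric.tendstoUniformlyOn_iff]
  intro ε hε
  obtain ⟨M, hM⟩ := htail ε hε
  have hη : 0 < ε / 4 := by linarith
  have hev : ∀ᶠ n in atTop, ∀ i ∈ Finset.range (⌈M / (ε / 4)⌉₊ + 1),
      |fn n (i * (ε / 4)) - f (i * (ε / 4))| < ε / 4 := by
    rw [Filter.eventually_all_finset]
    intro i _
    have := Metric.tendsto_nhds.1 (hlim (i * (ε / 4)) (by positivity)) (ε / 4) hη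
    simpa [Real.dist_eq] using this
  filter_upwards [hev] with n hnn x hx
  have hx : 0 ≤ x := hx
  rw [Real.dist_eq, abs_sub_comm]
  rcases le_or_gt M x with h | h
  · exact hM n x h
  have hi0 : 0 ≤ x / (ε / 4) := by positivity
  have h1 := Nat.floor_le hi0
  have h2 := Nat.lt_floor_add_one (x / (ε / 4))
  rw [le_div_iff₀ hη] at h1
  rw [div_lt_iff₀ hη] at h2
  have h3 := hnn ⌊x / (ε / 4)⌋₊ (by
    rw [Finset.mem_range, Nat.lt_succ_iff]
    calc _ ≤ ⌈x / (ε / 4)⌉₊ := Nat.floor_le_ceil _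
      _ ≤ _ := Nat.ceil_le_ceil (by gcongr))
  have hy : 0 ≤ (⌊x / (ε / 4)⌋₊ : ℝ) * (ε / 4) := by positivity
  have h4 := hn n _ x hy h1
  have h5 := hf _ x hy h1
  rw [abs_lt] at h3 ⊢
  constructor <;> linarith [h3.1, h3.2]

/-! ### The truncated functional -/

/-- The integrand of `GEplus`, split into relative entropy, slope entropy and potential. -/
def FF (up : ℝ) (u φ : ℝ → ℝ) (x : ℝ) : ℝ := DD (u x) (φ x) + S (deriv φ x) + lam up (φ x)

/-- A nonnegative modification of `FF`. On the domain of the functional, the added terms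
`a (x φ' - (φ₊ - φ))` and `φ' + e^{-1-ax}` have integrals over the half line that do not depend on
`φ`. -/
def NN (a up : ℝ) (u φ : ℝ → ℝ) (x : ℝ) : ℝ :=
  FF up u φ x + (a * (x * deriv φ x) + deriv φ x + Real.exp (-1 - a * x)) - a * (phiOf up - φ x)

/-- The integral of `NN` over `(0,L)`. -/
def JJ (a up : ℝ) (u φ : ℝ → ℝ) (L : ℝ) : ℝ := ∫ x in (0:ℝ)..L, NN a up u φ x

/-- The half-line domain of `GEplus`. -/
def Dom (up : ℝ) (u φ : ℝ → ℝ) : Prop :=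
  IntegrableOn (fun x => (u x - up)^2) (Ioi 0) volume ∧
      IntegrableOn (fun x => φ x - phiOf up) (Ioi 0) volume

lemma GEplus_eq {um up : ℝ} (h0 : 0 < up) (h1 : up < 1) (u φ : ℝ → ℝ) :
    GEplus um up u φ = if Dom up u φ then ((∫ x in Ioi (0:ℝ), FF up u φ x : ℝ) : EReal) else ⊤ := by
  have e : ∀ x, gg (u x) (φ x) (deriv φ x) - gg up (phiOf up) 0 = FF up u φ x :=
    fun x => gg_sub h0 h1 _ _ _
  unfold GEplus
  simp only [e]
  by_cases hd : Dom up u φ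
  · rw [if_pos hd]; exact if_pos hd
  · rw [if_neg hd]; exact if_neg hd

section
variable {um up : ℝ} {u φ : ℝ → ℝ}

lemma MemXplus.m1 (h : MemXplus um up u φ) : M1 φ := h.2.1

lemma MemXplus.range (h : MemXplus um up u φ) {x : ℝ} (hx : 0 ≤ x) :
    φ x ∈ Icc (phiOf um) (phiOf up) := by
  refine ⟨h.2.2.1 ▸ (h.m1 0 x le_rfl hx).1, ?_⟩
  refine ge_of_tendsto h.2.2.2 ?_
  filter_upwards [eventually_ge_atTop x] with y hy
  exact (h.m1 x y hx hy).1

lemma MemXplus.umem (h : MemXplus um up u φ) {x : ℝ} (hx : 0 < x) : u x ∈ Icc (0:ℝ) 1 :=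
  h.1.2 x hx.le

lemma MemXplus.aesm (h : MemXplus um up u φ) :
    AEStronglyMeasurable φ (volume.restrict (Ioi 0)) :=
  (h.m1.cont.mono Ioi_subset_Ici_self).aestronglyMeasurable measurableSet_Ioi

lemma MemXplus.aesm_comp (h : MemXplus um up u φ) {k : ℝ × ℝ × ℝ → ℝ} (hk : Continuous k) :
    AEStronglyMeasurable (fun x => k (u x, φ x, deriv φ x)) (volume.restrict (Ioi 0)) :=
  hk.comp_aestronglyMeasurable
    (h.1.1.aestronglyMeasurable.prodMk (h.aesm.prodMk (measurable_deriv φ).aestronglyMeasurable))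

lemma MemXplus.ii_comp (h : MemXplus um up u φ) {k : ℝ × ℝ × ℝ → ℝ} (hk : Continuous k)
    {a b : ℝ} (ha : 0 ≤ a) (hb : 0 ≤ b) :
    IntervalIntegrable (fun x => k (u x, φ x, deriv φ x)) volume a b := by
  obtain ⟨C, hC⟩ := (isCompact_Icc.prod (isCompact_Icc.prod isCompact_Icc) :
    IsCompact (Icc (0:ℝ) 1 ×ˢ Icc (phiOf um) (phiOf up) ×ˢ Icc (0:ℝ) 1)).exists_bound_of_continuousOn
    hk.continuousOn
  exact intervalIntegrable_of_bdd (C := C) ha hb (h.aesm_comp hk) fun x hx _ =>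
    hC _ ⟨h.umem hx, h.range hx.le, h.m1.deriv_mem hx⟩

lemma continuous_DDk : Continuous fun q : ℝ × ℝ × ℝ => DD q.1 q.2.1 := by
  have h2 : Continuous fun q : ℝ × ℝ × ℝ => q.2.1 := by fun_prop
  exact ((continuous_S.comp continuous_fst).sub (continuous_fst.mul h2)).add (continuous_l1e.comp h2)

lemma continuous_FFk (up : ℝ) :
    Continuous fun q : ℝ × ℝ × ℝ => DD q.1 q.2.1 + S q.2.2 + lam up q.2.1 := by
  have h2 : Continuous fun q : ℝ × ℝ × ℝ => q.2.1 := by fun_prop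
  have h3 : Continuous fun q : ℝ × ℝ × ℝ => q.2.2 := by fun_prop
  exact (continuous_DDk.add (continuous_S.comp h3)).add ((continuous_lam up).comp h2)

lemma MemXplus.ii_FF (h : MemXplus um up u φ) {a b : ℝ} (ha : 0 ≤ a) (hb : 0 ≤ b) :
    IntervalIntegrable (FF up u φ) volume a b := h.ii_comp (continuous_FFk up) ha hb

lemma MemXplus.ii_DD (h : MemXplus um up u φ) {a b : ℝ} (ha : 0 ≤ a) (hb : 0 ≤ b) :
    IntervalIntegrable (fun x => DD (u x) (φ x)) volume a b := h.ii_comp continuous_DDk ha hb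

lemma MemXplus.ii_psi (h : MemXplus um up u φ) {a b : ℝ} (ha : 0 ≤ a) (hb : 0 ≤ b) :
    IntervalIntegrable (fun x => phiOf up - φ x) volume a b :=
  h.ii_comp (k := fun q => phiOf up - q.2.1) (by fun_prop) ha hb

lemma MemXplus.ii_xp (h : MemXplus um up u φ) {a b : ℝ} (ha : 0 ≤ a) (hb : 0 ≤ b) :
    IntervalIntegrable (fun x => x * deriv φ x) volume a b :=
  (h.m1.ii_deriv ha hb).continuousOn_mul continuousOn_id

lemma ii_exp (c a b : ℝ) : IntervalIntegrable (fun x => Real.exp (-1 - c * x)) volume a b :=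
  Continuous.intervalIntegrable (by fun_prop) _ _

lemma MemXplus.ii_NN (h : MemXplus um up u φ) (c : ℝ) {a b : ℝ} (ha : 0 ≤ a) (hb : 0 ≤ b) :
    IntervalIntegrable (NN c up u φ) volume a b :=
  ((h.ii_FF ha hb).add ((((h.ii_xp ha hb).const_mul c).add (h.m1.ii_deriv ha hb)).add
    (ii_exp c a b))).sub ((h.ii_psi ha hb).const_mul c)

/-- The negative entropy of the slope is compensated by Young's inequality at `t = a x`, and the
cost `a (φ₊ - φ)` of doing so is paid by half of the potential. -/
lemma MemXplus.NN_ge (h : MemXplus um up u φ) {a : ℝ}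
    (hl : ∀ y ∈ Icc (phiOf um) (phiOf up), 2 * a * (phiOf up - y) ≤ lam up y) {x : ℝ} (hx : 0 < x) :
    DD (u x) (φ x) + a * (phiOf up - φ x) ≤ NN a up u φ x := by
  have h1 := hl _ (h.range hx.le)
  have h2 := neg_S_le (h.m1.deriv_mem hx) (a * x)
  unfold NN FF
  linarith

/-- Integration by parts for `x φ'`. -/
lemma MemXplus.int_xp (h : MemXplus um up u φ) {L : ℝ} (hL : 0 ≤ L) :
    ∫ x in (0:ℝ)..L, x * deriv φ x =
      (∫ x in (0:ℝ)..L, (phiOf up - φ x)) - L * (phiOf up - φ L) := by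
  have hid : AbsolutelyContinuousOnInterval (fun x : ℝ => x) 0 L :=
    contDiff_id.contDiffOn.absolutelyContinuousOnInterval
  have := hid.integral_mul_deriv_eq_deriv_mul (h.m1.ac le_rfl hL)
  rw [this]
  rw [intervalIntegral.integral_sub (by simp)
    (h.ii_comp (k := fun q => q.2.1) (by fun_prop) le_rfl hL)]
  simp
  ring

lemma MemXplus.JJ_eq (h : MemXplus um up u φ) (a : ℝ) {L : ℝ} (hL : 0 ≤ L) :
    JJ a up u φ L = (∫ x in (0:ℝ)..L, FF up u φ x) - a * (L * (phiOf up - φ L)) + (φ L - φ 0)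
      + ∫ x in (0:ℝ)..L, Real.exp (-1 - a * x) := by
  have i1 := h.ii_FF le_rfl hL
  have i2 := (h.ii_xp le_rfl hL).const_mul a
  have i3 := h.m1.ii_deriv le_rfl hL
  have i4 := ii_exp a 0 L
  have i5 := (h.ii_psi le_rfl hL).const_mul a
  unfold JJ NN
  rw [intervalIntegral.integral_sub (i1.add ((i2.add i3).add i4)) i5,
    intervalIntegral.integral_add i1 ((i2.add i3).add i4),
    intervalIntegral.integral_add (i2.add i3) i4, intervalIntegral.integral_add i2 i3,
    intervalIntegral.integral_const_mul, intervalIntegral.integral_const_mul, h.int_xp hL,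
    h.m1.integral le_rfl hL]
  ring

variable {a : ℝ}

lemma MemXplus.NN_nonneg (h : MemXplus um up u φ) (ha : 0 < a)
    (hl : ∀ y ∈ Icc (phiOf um) (phiOf up), 2 * a * (phiOf up - y) ≤ lam up y) {x : ℝ} (hx : 0 < x) :
    0 ≤ NN a up u φ x := by
  have h1 := h.NN_ge hl hx
  have h2 := DD_nonneg (h.umem hx) (φ x)
  have h3 := (h.range hx.le).2
  nlinarith

lemma MemXplus.JJ_mono (h : MemXplus um up u φ) (ha : 0 < a)
    (hl : ∀ y ∈ Icc (phiOf um) (phiOf up), 2 * a * (phiOf up - y) ≤ lam up y) {L M : ℝ}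
    (hL : 0 ≤ L) (hM : L ≤ M) : JJ a up u φ L ≤ JJ a up u φ M := by
  unfold JJ
  rw [← intervalIntegral.integral_add_adjacent_intervals (h.ii_NN a le_rfl hL)
    (h.ii_NN a hL (hL.trans hM))]
  have : 0 ≤ ∫ x in L..M, NN a up u φ x := by
    rw [intervalIntegral.integral_of_le hM]
    exact setIntegral_nonneg measurableSet_Ioc fun x hx => h.NN_nonneg ha hl (hL.trans_lt hx.1)
  linarith

lemma integral_mono_Ioi {f g : ℝ → ℝ} {L : ℝ} (hL : 0 ≤ L) (hf : IntervalIntegrable f volume 0 L)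
    (hg : IntervalIntegrable g volume 0 L) (h : ∀ x, 0 < x → f x ≤ g x) :
    ∫ x in (0:ℝ)..L, f x ≤ ∫ x in (0:ℝ)..L, g x := by
  rw [intervalIntegral.integral_of_le hL, intervalIntegral.integral_of_le hL]
  exact setIntegral_mono_on hf.1 hg.1 measurableSet_Ioc fun x hx => h x hx.1

lemma MemXplus.JJ_ge_psi (h : MemXplus um up u φ)
    (hl : ∀ y ∈ Icc (phiOf um) (phiOf up), 2 * a * (phiOf up - y) ≤ lam up y) {L : ℝ}
    (hL : 0 ≤ L) : a * ∫ x in (0:ℝ)..L, (phiOf up - φ x) ≤ JJ a up u φ L := by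
  rw [← intervalIntegral.integral_const_mul]
  refine integral_mono_Ioi hL ((h.ii_psi le_rfl hL).const_mul a) (h.ii_NN a le_rfl hL) fun x hx => ?_
  have h1 := h.NN_ge hl hx
  have h2 := DD_nonneg (h.umem hx) (φ x)
  linarith

lemma MemXplus.JJ_ge_DD (h : MemXplus um up u φ) (ha : 0 < a)
    (hl : ∀ y ∈ Icc (phiOf um) (phiOf up), 2 * a * (phiOf up - y) ≤ lam up y) {L : ℝ}
    (hL : 0 ≤ L) : ∫ x in (0:ℝ)..L, DD (u x) (φ x) ≤ JJ a up u φ L := by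
  refine integral_mono_Ioi hL (h.ii_DD le_rfl hL) (h.ii_NN a le_rfl hL) fun x hx => ?_
  have h1 := h.NN_ge hl hx
  have h3 := (h.range hx.le).2
  nlinarith

lemma MemXplus.mul_psi_le (h : MemXplus um up u φ) {L : ℝ} (hL : 0 ≤ L) :
    L * (phiOf up - φ L) ≤ ∫ x in (0:ℝ)..L, (phiOf up - φ x) := by
  have h1 := h.int_xp hL
  have : 0 ≤ ∫ x in (0:ℝ)..L, x * deriv φ x := by
    rw [intervalIntegral.integral_of_le hL]
    exact setIntegral_nonneg measurableSet_Ioc fun x hx =>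
      mul_nonneg hx.1.le (h.m1.deriv_mem hx.1).1
  linarith

lemma integrableOn_of_bdd {f : ℝ → ℝ} {B : ℝ} (hf : ∀ L, 0 ≤ L → IntervalIntegrable f volume 0 L)
    (h0 : ∀ x, 0 < x → 0 ≤ f x) (hB : ∀ L, 0 ≤ L → ∫ x in (0:ℝ)..L, f x ≤ B) :
    IntegrableOn f (Ioi 0) volume := by
  refine integrableOn_Ioi_of_intervalIntegral_norm_bounded (l := atTop) (b := fun x : ℝ => x) B 0
    (fun L => ?_) tendsto_id ?_
  · rcases le_total 0 L with hL | hL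
    · exact (hf L hL).1
    · rw [Ioc_eq_empty (not_lt.2 hL)]; exact integrableOn_empty
  · filter_upwards [eventually_ge_atTop 0] with L hL
    refine le_trans (le_of_eq ?_) (hB L hL)
    rw [intervalIntegral.integral_of_le hL, intervalIntegral.integral_of_le hL]
    refine setIntegral_congr_fun measurableSet_Ioc fun x hx => ?_
    exact Real.norm_of_nonneg (h0 x hx.1)

lemma tendsto_int {f : ℝ → ℝ} (hf : IntegrableOn f (Ioi 0) volume) :
    Tendsto (fun L => ∫ x in (0:ℝ)..L, f x) atTop (𝓝 (∫ x in Ioi (0:ℝ), f x)) :=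
  intervalIntegral_tendsto_integral_Ioi 0 hf tendsto_id

lemma int_le_of_nonneg {f : ℝ → ℝ} (hf : IntegrableOn f (Ioi 0) volume)
    (h0 : ∀ x, 0 < x → 0 ≤ f x) {L : ℝ} (hL : 0 ≤ L) :
    ∫ x in (0:ℝ)..L, f x ≤ ∫ x in Ioi (0:ℝ), f x := by
  rw [intervalIntegral.integral_of_le hL]
  exact setIntegral_mono_set hf ((ae_restrict_mem measurableSet_Ioi).mono fun x hx => h0 x hx)
    Ioc_subset_Ioi_self.eventuallyLE

lemma sg_sub_sq_le (hup0 : 0 < up) (hup1 : up < 1) {y : ℝ} (hy : y ≤ phiOf up) :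
    (sg y - up) ^ 2 ≤ phiOf up - y := by
  have h1 := sg_mono hy
  have h2 := sg_lipschitz hy
  rw [sg_phiOf hup0 hup1] at h1 h2
  have := sg_pos y
  nlinarith

/-- Boundedness of the truncated functionals forces membership in the domain: the potential
controls `φ₊ - φ` in `L¹` and Pinsker's inequality controls `u - u₊` in `L²`. -/
lemma MemXplus.dom_of_bdd (h : MemXplus um up u φ) (hup0 : 0 < up) (hup1 : up < 1) (ha : 0 < a)
    (hl : ∀ y ∈ Icc (phiOf um) (phiOf up), 2 * a * (phiOf up - y) ≤ lam up y) {B : ℝ}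
    (hB : ∀ L, 0 ≤ L → JJ a up u φ L ≤ B) : Dom up u φ := by
  have hψ : IntegrableOn (fun x => phiOf up - φ x) (Ioi 0) volume := by
    refine integrableOn_of_bdd (B := B / a) (fun L hL => h.ii_psi le_rfl hL)
      (fun x hx => by linarith [(h.range hx.le).2]) fun L hL => ?_
    rw [le_div_iff₀ ha, mul_comm]
    exact (h.JJ_ge_psi hl hL).trans (hB L hL)
  have hD : IntegrableOn (fun x => DD (u x) (φ x)) (Ioi 0) volume :=
    integrableOn_of_bdd (B := B) (fun L hL => h.ii_DD le_rfl hL)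
      (fun x hx => DD_nonneg (h.umem hx) _) fun L hL => (h.JJ_ge_DD ha hl hL).trans (hB L hL)
  refine ⟨?_, ?_⟩
  · refine Integrable.mono' ((hD.const_mul 4).add (hψ.const_mul 2))
      (((h.1.1.sub_const up).pow_const 2).aestronglyMeasurable) ?_
    filter_upwards [ae_restrict_mem measurableSet_Ioi] with x hx
    have h1 := DD_ge (h.umem hx) (φ x)
    have h2 := sg_sub_sq_le hup0 hup1 (h.range (le_of_lt hx)).2
    rw [Real.norm_of_nonneg (by positivity)]
    simp only [Pi.add_apply]
    nlinarith [sq_nonneg (u x - sg (φ x) - (sg (φ x) - up))]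
  · have := hψ.neg
    refine this.congr (Eventually.of_forall fun x => ?_)
    simp

/-- On the domain the integrand is integrable, and the boundary term of the integration by parts
vanishes at infinity. The entropy of the slope is integrable because `x φ'` is. -/
lemma MemXplus.integrable_FF (h : MemXplus um up u φ) (hum : 0 < um) (humup : um < up)
    (hup1 : up < 1) (hd : Dom up u φ) : IntegrableOn (FF up u φ) (Ioi 0) volume ∧
      Tendsto (fun L => L * (phiOf up - φ L)) atTop (𝓝 0) := by
  have hup0 : 0 < up := by linarith
  have hψ : IntegrableOn (fun x => phiOf up - φ x) (Ioi 0) volume := by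
    refine hd.2.neg.congr (Eventually.of_forall fun x => ?_)
    simp
  have hψ0 : ∀ x, 0 < x → 0 ≤ phiOf up - φ x := fun x hx => by linarith [(h.range hx.le).2]
  have hp : IntegrableOn (deriv φ) (Ioi 0) volume :=
    integrableOn_of_bdd (B := phiOf up - phiOf um) (fun L hL => h.m1.ii_deriv le_rfl hL)
      (fun x hx => (h.m1.deriv_mem hx).1) fun L hL => by
        rw [h.m1.integral le_rfl hL, h.2.2.1]; linarith [(h.range hL).2]
  have hxp : IntegrableOn (fun x => x * deriv φ x) (Ioi 0) volume :=
    integrableOn_of_bdd (B := ∫ x in Ioi (0:ℝ), (phiOf up - φ x)) (fun L hL => h.ii_xp le_rfl hL)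
      (fun x hx => mul_nonneg hx.le (h.m1.deriv_mem hx).1) fun L hL => by
        rw [h.int_xp hL]
        have := int_le_of_nonneg hψ hψ0 hL
        have := mul_nonneg hL (sub_nonneg.2 (h.range hL).2)
        linarith
  have he : IntegrableOn (fun x => Real.exp (-1 - x)) (Ioi 0) volume := by
    have := (exp_neg_integrableOn_Ioi 0 (b := 1) one_pos).const_mul (Real.exp (-1))
    refine this.congr (Eventually.of_forall fun x => ?_)
    simp only; rw [← Real.exp_add]; ring_nf
  have hS : IntegrableOn (fun x => S (deriv φ x)) (Ioi 0) volume := by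
    refine Integrable.mono' ((hxp.add hp).add he)
      (continuous_S.comp_aestronglyMeasurable (measurable_deriv φ).aestronglyMeasurable) ?_
    filter_upwards [ae_restrict_mem measurableSet_Ioi] with x hx
    have h1 := neg_S_le (h.m1.deriv_mem hx) x
    rw [Real.norm_eq_abs, abs_of_nonpos (S_nonpos (h.m1.deriv_mem hx))]
    simpa using h1
  have hlam : IntegrableOn (fun x => lam up (φ x)) (Ioi 0) volume := by
    refine Integrable.mono' hψ ((continuous_lam up).comp_aestronglyMeasurable h.aesm) ?_
    filter_upwards [ae_restrict_mem measurableSet_Ioi] with x hx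
    have h1 := (h.range (le_of_lt hx)).2
    rw [Real.norm_eq_abs, abs_le]
    refine ⟨?_, lam_le hup0 hup1 h1⟩
    have e : lam up (phiOf up) = 0 := by rw [lam_phiOf hup0 hup1]; ring
    have h2 : Real.log (1 + Real.exp (φ x)) ≤ Real.log (1 + Real.exp (phiOf up)) := by gcongr
    unfold lam at e ⊢
    linarith
  have hD : IntegrableOn (fun x => DD (u x) (φ x)) (Ioi 0) volume := by
    refine Integrable.mono' ((hd.1.add hψ).const_mul (2 / (um * (1 - up))))
      (h.aesm_comp continuous_DDk) ?_
    filter_upwards [ae_restrict_mem measurableSet_Ioi] with x hx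
    have h1 := DD_le (h.umem hx) (φ x)
    have h2 := sg_sub_sq_le hup0 hup1 (h.range (le_of_lt hx)).2
    rw [Real.norm_of_nonneg (DD_nonneg (h.umem hx) _)]
    refine h1.trans ?_
    have h3 := sg_mono (h.range (le_of_lt hx)).1
    have h4 := sg_mono (h.range (le_of_lt hx)).2
    rw [sg_phiOf hum (by linarith)] at h3
    rw [sg_phiOf hup0 hup1] at h4
    have h5 : 0 < um * (1 - up) := mul_pos hum (by linarith)
    have h6 : um * (1 - up) ≤ sg (φ x) * (1 - sg (φ x)) :=
      mul_le_mul h3 (by linarith) (by linarith) (by linarith)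
    simp only [Pi.add_apply]
    calc _ ≤ (u x - sg (φ x)) ^ 2 / (um * (1 - up)) := by gcongr
      _ ≤ (2 * ((u x - up) ^ 2 + (phiOf up - φ x))) / (um * (1 - up)) := by
        gcongr
        nlinarith [sq_nonneg (u x - up + (sg (φ x) - up))]
      _ = _ := by ring
  refine ⟨(hD.add hS).add hlam, ?_⟩
  have e1 := tendsto_int hψ
  have e2 := e1.comp (tendsto_id.atTop_div_const (two_pos : (0:ℝ) < 2))
  have e3 := (e1.sub e2).const_mul 2
  rw [sub_self, mul_zero] at e3
  refine tendsto_of_tendsto_of_tendsto_of_le_of_le' tendsto_const_nhds e3 ?_ ?_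
  · filter_upwards [eventually_ge_atTop 0] with L hL
    exact mul_nonneg hL (sub_nonneg.2 (h.range hL).2)
  · -- `φ₊ - φ` decreases, so `(L/2) (φ₊ - φ(L))` is at most its integral over `(L/2, L)`
    filter_upwards [eventually_ge_atTop 0] with L hL
    have hL2 : 0 ≤ L / 2 := by linarith
    have h3 : L / 2 ≤ L := by linarith
    have h1 : ∫ x in (L/2)..L, (phiOf up - φ L) ≤ ∫ x in (L/2)..L, (phiOf up - φ x) := by
      refine intervalIntegral.integral_mono_on h3 (by simp) (h.ii_psi hL2 hL) fun x hx => ?_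
      have := (h.m1 x L (hL2.trans hx.1) hx.2).1
      linarith
    have h2 := intervalIntegral.integral_add_adjacent_intervals (h.ii_psi le_rfl hL2)
      (h.ii_psi hL2 hL)
    rw [intervalIntegral.integral_const, smul_eq_mul] at h1
    simp only [Function.comp, id]
    nlinarith

/-- On the domain, the functional is the limit of the truncations, up to a constant that depends
on the boundary values only. -/
lemma MemXplus.tendsto_JJ (h : MemXplus um up u φ) (hum : 0 < um) (humup : um < up)
    (hup1 : up < 1) (hd : Dom up u φ) (ha : 0 < a) :
    Tendsto (JJ a up u φ) atTop (𝓝 ((∫ x in Ioi (0:ℝ), FF up u φ x) +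
      (phiOf up - phiOf um + ∫ x in Ioi (0:ℝ), Real.exp (-1 - a * x)))) := by
  obtain ⟨h1, h2⟩ := h.integrable_FF hum humup hup1 hd
  have he : IntegrableOn (fun x => Real.exp (-1 - a * x)) (Ioi 0) volume := by
    have := (exp_neg_integrableOn_Ioi 0 (b := a) ha).const_mul (Real.exp (-1))
    refine this.congr (Eventually.of_forall fun x => ?_)
    simp only; rw [← Real.exp_add]; ring_nf
  have h3 := (((tendsto_int h1).sub (h2.const_mul a)).add (h.2.2.2.sub_const (phiOf um))).add
    (tendsto_int he)
  rw [mul_zero, sub_zero, add_assoc] at h3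
  refine h3.congr' ?_
  filter_upwards [eventually_ge_atTop 0] with L hL
  rw [h.JJ_eq a hL, h.2.2.1]

end

/-! ### Lower semicontinuity -/

lemma weak_interval {vn : ℕ → ℝ → ℝ} {v f : ℝ → ℝ}
    (hw : ∀ f : ℝ → ℝ, IntegrableOn f (Ioi 0) volume →
      Tendsto (fun n => ∫ x in Ioi (0:ℝ), vn n x * f x) atTop (𝓝 (∫ x in Ioi (0:ℝ), v x * f x)))
    {L : ℝ} (hL : 0 ≤ L) (hf : IntervalIntegrable f volume 0 L) :
    Tendsto (fun n => ∫ x in (0:ℝ)..L, vn n x * f x) atTop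
      (𝓝 (∫ x in (0:ℝ)..L, v x * f x)) := by
  have e : ∀ w : ℝ → ℝ, ∫ x in Ioi (0:ℝ), w x * (Ioc 0 L).indicator f x =
      ∫ x in (0:ℝ)..L, w x * f x := by
    intro w
    rw [intervalIntegral.integral_of_le hL]
    have : (fun x => w x * (Ioc 0 L).indicator f x) = (Ioc 0 L).indicator fun x => w x * f x := by
      ext x; by_cases hx : x ∈ Ioc 0 L <;> simp [hx]
    rw [this, setIntegral_indicator measurableSet_Ioc, inter_eq_right.2 Ioc_subset_Ioi_self]
  have := hw ((Ioc 0 L).indicator f)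
    ((hf.1.integrable_indicator measurableSet_Ioc).integrableOn)
  simpa only [e] using this

/-- Weak-* lower semicontinuity of the entropy `∫ s(v)`. By convexity `s` lies above the affine
functions `t ↦ t log r + (1-t) log (1-r)`; the tangency point `r` is `v` slightly contracted
towards `1/2`, which keeps these affine functions bounded. -/
lemma entropy_lsc {vn : ℕ → ℝ → ℝ} {v : ℝ → ℝ} (hmn : ∀ n, Measurable (vn n)) (hm : Measurable v)
    (hn : ∀ n x, 0 < x → vn n x ∈ Icc (0:ℝ) 1) (hv : ∀ x, 0 < x → v x ∈ Icc (0:ℝ) 1)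
    (hw : ∀ f : ℝ → ℝ, IntegrableOn f (Ioi 0) volume →
      Tendsto (fun n => ∫ x in Ioi (0:ℝ), vn n x * f x) atTop (𝓝 (∫ x in Ioi (0:ℝ), v x * f x)))
    {L ε : ℝ} (hL : 0 ≤ L) (hε : 0 < ε) :
    ∀ᶠ n in atTop, (∫ x in (0:ℝ)..L, S (v x)) - ε < ∫ x in (0:ℝ)..L, S (vn n x) := by
  -- contracting `v` by the factor `1 - η` lowers the integral by at most `- L log (1 - η)`
  obtain ⟨η, hη0, hη1, hηL⟩ : ∃ η : ℝ, 0 < η ∧ η < 1 ∧ L * Real.log (1 - η) > - (ε / 2) := by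
    refine ⟨1 - Real.exp (-(ε / (2 * (L + 1)))), ?_, ?_, ?_⟩
    · have : Real.exp (-(ε / (2 * (L + 1)))) < 1 := by
        rw [Real.exp_lt_one_iff]
        have : 0 < ε / (2 * (L + 1)) := by positivity
        linarith
      linarith
    · linarith [Real.exp_pos (-(ε / (2 * (L + 1))))]
    · rw [sub_sub_cancel, Real.log_exp]
      have : L * (ε / (2 * (L + 1))) < ε / 2 := by
        rw [mul_div_assoc', div_lt_div_iff₀ (by positivity) (by positivity)]
        nlinarith
      linarith
  set r : ℝ → ℝ := fun x => (1 - η) * v x + η / 2 with hr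
  have hr0 : ∀ x, 0 < x → η / 2 ≤ r x := fun x hx => by
    have := mul_nonneg (sub_nonneg.2 hη1.le) (hv x hx).1
    simp only [hr]; linarith
  have hr1 : ∀ x, 0 < x → η / 2 ≤ 1 - r x := fun x hx => by
    have := mul_nonneg (sub_nonneg.2 hη1.le) (sub_nonneg.2 (hv x hx).2)
    simp only [hr]; linarith
  have hmr : Measurable r := (hm.const_mul _).add_const _
  have hbd : ∀ t : ℝ, η / 2 ≤ t → t ≤ 1 → |Real.log t| ≤ - Real.log (η / 2) := by
    intro t h1 h2
    rw [abs_of_nonpos (Real.log_nonpos (by linarith) h2)]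
    have := Real.log_le_log (by linarith) h1
    linarith
  have i1 : IntervalIntegrable (fun x => Real.log (r x)) volume 0 L :=
    intervalIntegrable_of_bdd le_rfl hL hmr.log.aestronglyMeasurable
      fun x hx _ => hbd _ (hr0 x hx) (by linarith [hr1 x hx])
  have i2 : IntervalIntegrable (fun x => Real.log (1 - r x)) volume 0 L :=
    intervalIntegrable_of_bdd le_rfl hL (hmr.const_sub 1).log.aestronglyMeasurable
      fun x hx _ => hbd _ (hr1 x hx) (by linarith [hr0 x hx])
  have iS : ∀ w : ℝ → ℝ, Measurable w → (∀ x, 0 < x → w x ∈ Icc (0:ℝ) 1) →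
      IntervalIntegrable (fun x => S (w x)) volume 0 L := by
    intro w hw1 hw2
    obtain ⟨C, hC⟩ := isCompact_Icc.exists_bound_of_continuousOn
      (continuous_S.continuousOn (s := Icc (0:ℝ) 1))
    exact intervalIntegrable_of_bdd le_rfl hL
      (continuous_S.measurable.comp hw1).aestronglyMeasurable fun x hx _ => hC _ (hw2 x hx)
  have iw : ∀ w : ℝ → ℝ, Measurable w → (∀ x, 0 < x → w x ∈ Icc (0:ℝ) 1) →
      IntervalIntegrable (fun x => w x * (Real.log (r x) - Real.log (1 - r x))) volume 0 L := by
    intro w hw1 hw2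
    refine intervalIntegrable_of_bdd (C := - Real.log (η / 2) + - Real.log (η / 2)) le_rfl hL
      (hw1.mul (hmr.log.sub (hmr.const_sub 1).log)).aestronglyMeasurable fun x hx _ => ?_
    have h1 := hbd _ (hr0 x hx) (by linarith [hr1 x hx])
    have h2 := hbd _ (hr1 x hx) (by linarith [hr0 x hx])
    rw [abs_mul, abs_of_nonneg (hw2 x hx).1]
    have h3 := abs_sub (Real.log (r x)) (Real.log (1 - r x))
    have h4 := abs_nonneg (Real.log (r x) - Real.log (1 - r x))
    nlinarith [(hw2 x hx).2, (hw2 x hx).1]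
  have ht := weak_interval hw hL (i1.sub i2)
  have hlow : ∀ n, (∫ x in (0:ℝ)..L, vn n x * (Real.log (r x) - Real.log (1 - r x))) +
      ∫ x in (0:ℝ)..L, Real.log (1 - r x) ≤ ∫ x in (0:ℝ)..L, S (vn n x) := by
    intro n
    rw [← intervalIntegral.integral_add (iw _ (hmn n) (hn n)) i2]
    refine integral_mono_Ioi hL ((iw _ (hmn n) (hn n)).add i2) (iS _ (hmn n) (hn n)) fun x hx => ?_
    have := gibbs (hn n x hx) (r := r x) (by linarith [hr0 x hx]) (by linarith [hr1 x hx])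
    nlinarith [sq_nonneg (vn n x - r x)]
  have hup : (∫ x in (0:ℝ)..L, S (v x)) + L * Real.log (1 - η) ≤
      (∫ x in (0:ℝ)..L, v x * (Real.log (r x) - Real.log (1 - r x))) +
      ∫ x in (0:ℝ)..L, Real.log (1 - r x) := by
    have e : L * Real.log (1 - η) = ∫ x in (0:ℝ)..L, Real.log (1 - η) := by simp
    rw [e, ← intervalIntegral.integral_add (iw _ hm hv) i2,
      ← intervalIntegral.integral_add (iS _ hm hv) (by simp)]
    refine integral_mono_Ioi hL ((iS _ hm hv).add (by simp)) ((iw _ hm hv).add i2) fun x hx => ?_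
    have key : ∀ t s : ℝ, 0 ≤ t → (1 - η) * t ≤ s →
        t * Real.log t + t * Real.log (1 - η) ≤ t * Real.log s := by
      intro t s ht hs
      rcases ht.eq_or_lt with rfl | ht
      · simp
      have h1 : 0 < (1 - η) * t := mul_pos (by linarith) ht
      have h2 := Real.log_le_log h1 hs
      rw [Real.log_mul (by linarith) ht.ne'] at h2
      nlinarith
    have k1 := key (v x) (r x) (hv x hx).1 (by simp only [hr]; linarith)
    have k2 := key (1 - v x) (1 - r x) (by linarith [(hv x hx).2]) (by simp only [hr]; linarith)
    unfold S
    nlinarith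
  have := (ht.add_const (∫ x in (0:ℝ)..L, Real.log (1 - r x)))
  have h3 := (tendsto_order.1 this).1 ((∫ x in (0:ℝ)..L, S (v x)) - ε) (by
    refine lt_of_lt_of_le ?_ hup
    linarith)
  filter_upwards [h3] with n hn3
  exact lt_of_lt_of_le hn3 (hlow n)

section
variable {um up : ℝ} {u φ : ℝ → ℝ} {un φn : ℕ → ℝ → ℝ}

/-- Lower semicontinuity of the truncated functional. The two entropies are handled by
`entropy_lsc`, every other term is continuous. -/
lemma JJ_lsc (h : MemXplus um up u φ) (hn : ∀ n, MemXplus um up (un n) (φn n))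
    (hc : ConvXplus un φn u φ) (a : ℝ) {L ε : ℝ} (hL : 0 ≤ L) (hε : 0 < ε) :
    ∀ᶠ n in atTop, JJ a up u φ L - ε < JJ a up (un n) (φn n) L := by
  have hlim : ∀ x, 0 ≤ x → Tendsto (fun n => φn n x) atTop (𝓝 (φ x)) :=
    fun x hx => hc.2.tendsto_at hx
  have e1 := entropy_lsc (fun n => (hn n).1.1) h.1.1 (fun n x hx => (hn n).umem hx)
    (fun x hx => h.umem hx) hc.1 hL (show 0 < ε / 4 by linarith)
  have e2 := entropy_lsc (fun n => measurable_deriv (φn n)) (measurable_deriv φ)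
    (fun n x hx => (hn n).m1.deriv_mem hx) (fun x hx => h.m1.deriv_mem hx)
    (fun f hf => weak_deriv (fun n => (hn n).m1) h.m1 hlim hf) hL (show 0 < ε / 4 by linarith)
  have split : ∀ {w χ : ℝ → ℝ}, MemXplus um up w χ → ∫ x in (0:ℝ)..L, FF up w χ x =
      (∫ x in (0:ℝ)..L, S (w x)) + (∫ x in (0:ℝ)..L, S (deriv χ x)) +
      ((∫ x in (0:ℝ)..L, (Real.log (1 + Real.exp (χ x)) + lam up (χ x)))
        - (∫ x in (0:ℝ)..L, w x * φ x) - ∫ x in (0:ℝ)..L, w x * (χ x - φ x)) := by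
    intro w χ hw
    have c2 : Continuous fun q : ℝ × ℝ × ℝ => q.2.1 := by fun_prop
    have c3 : Continuous fun q : ℝ × ℝ × ℝ => q.2.2 := by fun_prop
    have i1 := hw.ii_comp (continuous_S.comp continuous_fst) le_rfl hL
    have i2 := hw.ii_comp (continuous_S.comp c3) le_rfl hL
    have i3 : IntervalIntegrable (fun x => Real.log (1 + Real.exp (χ x)) + lam up (χ x))
        volume 0 L :=
      hw.ii_comp ((continuous_l1e.comp c2).add ((continuous_lam up).comp c2)) le_rfl hL
    have i4 : IntervalIntegrable (fun x => w x * φ x) volume 0 L :=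
      (hw.ii_comp continuous_fst le_rfl hL).mul_continuousOn
        (h.m1.cont.mono (uIcc_subset_Ici le_rfl hL))
    have i5 : IntervalIntegrable (fun x => w x * (χ x - φ x)) volume 0 L :=
      (hw.ii_comp continuous_fst le_rfl hL).mul_continuousOn
        ((hw.m1.cont.mono (uIcc_subset_Ici le_rfl hL)).sub
          (h.m1.cont.mono (uIcc_subset_Ici le_rfl hL)))
    simp only [Function.comp_def] at i1 i2
    rw [← intervalIntegral.integral_add i1 i2, ← intervalIntegral.integral_sub i3 i4,
      ← intervalIntegral.integral_sub (i3.sub i4) i5,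
      ← intervalIntegral.integral_add (i1.add i2) ((i3.sub i4).sub i5)]
    refine intervalIntegral.integral_congr fun x _ => ?_
    simp only [FF, DD]; ring
  have t1 : Tendsto (fun n => ∫ x in (0:ℝ)..L, un n x * φ x) atTop
      (𝓝 (∫ x in (0:ℝ)..L, u x * φ x)) :=
    weak_interval hc.1 hL ((h.m1.cont.mono (uIcc_subset_Ici le_rfl hL)).intervalIntegrable)
  have hmemL : ∀ x ∈ uIoc 0 L, 0 < x := fun x hx => by
    rw [uIoc_of_le hL] at hx; exact hx.1
  have hsub : uIoc 0 L ⊆ Ioi 0 := hmemL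
  have t2 : Tendsto (fun n => ∫ x in (0:ℝ)..L, un n x * (φn n x - φ x)) atTop
      (𝓝 (∫ x in (0:ℝ)..L, (0:ℝ))) := by
    refine intervalIntegral.tendsto_integral_filter_of_dominated_convergence
      (fun _ => phiOf up - phiOf um) (Eventually.of_forall fun n => ?_)
      (Eventually.of_forall fun n => Eventually.of_forall fun x hx => ?_) (by simp)
      (Eventually.of_forall fun x hx => ?_)
    · exact ((hn n).1.1.aestronglyMeasurable.mul ((hn n).aesm.sub h.aesm)).mono_set hsub
    · have hx := hmemL x hx
      have h1 := (hn n).umem hx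
      have h2 := (hn n).range hx.le
      have h3 := h.range hx.le
      rw [Real.norm_eq_abs, abs_mul, abs_of_nonneg h1.1]
      have h4 : |φn n x - φ x| ≤ phiOf up - phiOf um := by
        rw [abs_le]; constructor <;> linarith [h2.1, h2.2, h3.1, h3.2]
      nlinarith [abs_nonneg (φn n x - φ x), h1.1, h1.2]
    · have hx := hmemL x hx
      have h1 : Tendsto (fun n => |φn n x - φ x|) atTop (𝓝 0) := by
        have := ((hlim x hx.le).sub_const (φ x)).abs
        simpa using this
      refine squeeze_zero_norm (fun n => ?_) h1
      rw [Real.norm_eq_abs, abs_mul, abs_of_nonneg ((hn n).umem hx).1]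
      nlinarith [abs_nonneg (φn n x - φ x), ((hn n).umem hx).2]
  have ck : Continuous fun y : ℝ => Real.log (1 + Real.exp y) + lam up y :=
    continuous_l1e.add (continuous_lam up)
  have t3 : Tendsto (fun n => ∫ x in (0:ℝ)..L,
        (Real.log (1 + Real.exp (φn n x)) + lam up (φn n x))) atTop
      (𝓝 (∫ x in (0:ℝ)..L, (Real.log (1 + Real.exp (φ x)) + lam up (φ x)))) := by
    obtain ⟨C, hC⟩ := isCompact_Icc.exists_bound_of_continuousOn
      (ck.continuousOn (s := Icc (phiOf um) (phiOf up)))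
    refine intervalIntegral.tendsto_integral_filter_of_dominated_convergence
      (fun _ => C) (Eventually.of_forall fun n => ?_)
      (Eventually.of_forall fun n => Eventually.of_forall fun x hx => ?_) (by simp)
      (Eventually.of_forall fun x hx => ?_)
    · exact (ck.comp_aestronglyMeasurable (hn n).aesm).mono_set hsub
    · exact hC _ ((hn n).range (hmemL x hx).le)
    · exact (ck.tendsto _).comp (hlim x (hmemL x hx).le)
  have t4 : Tendsto (fun n => ((∫ x in (0:ℝ)..L,
        (Real.log (1 + Real.exp (φn n x)) + lam up (φn n x)))
        - (∫ x in (0:ℝ)..L, un n x * φ x) - ∫ x in (0:ℝ)..L, un n x * (φn n x - φ x))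
        - a * (L * (phiOf up - φn n L)) + (φn n L - φn n 0)) atTop
      (𝓝 (((∫ x in (0:ℝ)..L, (Real.log (1 + Real.exp (φ x)) + lam up (φ x)))
        - (∫ x in (0:ℝ)..L, u x * φ x) - 0)
        - a * (L * (phiOf up - φ L)) + (φ L - φ 0))) := by
    rw [intervalIntegral.integral_zero] at t2
    exact (((t3.sub t1).sub t2).sub ((((hlim L hL).const_sub _).const_mul L).const_mul a)).add
      ((hlim L hL).sub (hlim 0 le_rfl))
  have e3 := (tendsto_order.1 t4).1 _ (sub_lt_self _ (show 0 < ε / 4 by linarith))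
  filter_upwards [e1, e2, e3] with n h1 h2 h3
  rw [h.JJ_eq a hL, (hn n).JJ_eq a hL, split h, split (hn n)]
  simp only [sub_self, mul_zero, intervalIntegral.integral_zero]
  linarith

variable {a : ℝ}

/-- The truncations, lowered by a constant, lie below the functional. -/
lemma JJ_le_GEplus (hum : 0 < um) (humup : um < up) (hup1 : up < 1) (ha : 0 < a)
    (hl : ∀ y ∈ Icc (phiOf um) (phiOf up), 2 * a * (phiOf up - y) ≤ lam up y)
    (h : MemXplus um up u φ) {L : ℝ} (hL : 0 ≤ L) :
    ((JJ a up u φ L - (phiOf up - phiOf um + ∫ x in Ioi (0:ℝ), Real.exp (-1 - a * x)) : ℝ) : EReal)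
      ≤ GEplus um up u φ := by
  rw [GEplus_eq (hum.trans humup) hup1]
  by_cases hd : Dom up u φ
  · rw [if_pos hd, EReal.coe_le_coe_iff]
    have h1 := ge_of_tendsto (h.tendsto_JJ hum humup hup1 hd ha) (b := JJ a up u φ L) (by
      filter_upwards [eventually_ge_atTop L] with M hM
      exact h.JJ_mono ha hl hL hM)
    linarith
  · rw [if_neg hd]; exact le_top

/-- Conversely the truncations, lowered by the same constant, come above every level below the
functional, also when the functional is infinite. -/
lemma exists_JJ_gt (hum : 0 < um) (humup : um < up) (hup1 : up < 1) (ha : 0 < a)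
    (hl : ∀ y ∈ Icc (phiOf um) (phiOf up), 2 * a * (phiOf up - y) ≤ lam up y)
    (h : MemXplus um up u φ) {b : ℝ} (hb : (b : EReal) < GEplus um up u φ) :
    ∃ L, 0 ≤ L ∧
      b < JJ a up u φ L - (phiOf up - phiOf um + ∫ x in Ioi (0:ℝ), Real.exp (-1 - a * x)) := by
  rw [GEplus_eq (hum.trans humup) hup1] at hb
  by_cases hd : Dom up u φ
  · rw [if_pos hd, EReal.coe_lt_coe_iff] at hb
    have h1 := (tendsto_order.1 (h.tendsto_JJ hum humup hup1 hd ha)).1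
      (b + (phiOf up - phiOf um + ∫ x in Ioi (0:ℝ), Real.exp (-1 - a * x))) (by linarith)
    obtain ⟨L, hL, hL0⟩ := (h1.and (eventually_ge_atTop 0)).exists
    exact ⟨L, hL0, by linarith⟩
  · by_contra! hcon
    refine hd (h.dom_of_bdd (hum.trans humup) hup1 ha hl
      (B := b + (phiOf up - phiOf um + ∫ x in Ioi (0:ℝ), Real.exp (-1 - a * x))) fun L hL => ?_)
    linarith [hcon L hL]

/-- The functional is a supremum of lower semicontinuous truncations. -/
lemma GEplus_lsc (hum : 0 < um) (humup : um < up) (hup1 : up < 1) (hsum : 1 < um + up)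
    (h : MemXplus um up u φ) (hn : ∀ n, MemXplus um up (un n) (φn n))
    (hc : ConvXplus un φn u φ) :
    GEplus um up u φ ≤ Filter.liminf (fun n => GEplus um up (un n) (φn n)) atTop := by
  obtain ⟨δ, hδ, hδ'⟩ := exists_lam_ge hum humup hup1 hsum
  have ha : 0 < δ / 2 := by linarith
  have hl : ∀ y ∈ Icc (phiOf um) (phiOf up), 2 * (δ / 2) * (phiOf up - y) ≤ lam up y := by
    intro y hy
    rw [mul_div_cancel₀ _ (two_ne_zero)]; exact hδ' y hy
  refine (Filter.le_liminf_iff).2 fun b hb => ?_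
  obtain ⟨c, hbc, hc1⟩ := EReal.lt_iff_exists_real_btwn.1 hb
  obtain ⟨L, hL, hcL⟩ := exists_JJ_gt hum humup hup1 ha hl h hc1
  filter_upwards [JJ_lsc h hn hc (δ / 2) hL (sub_pos.2 hcL)] with n hnn
  refine hbc.trans (lt_of_lt_of_le ?_ (JJ_le_GEplus hum humup hup1 ha hl (hn n) hL))
  rw [EReal.coe_lt_coe_iff]
  linarith

end

/-! ### Coercivity -/

section
variable {um up : ℝ} {un φn : ℕ → ℝ → ℝ}

/-- A bound on the functional bounds `L (φ₊ - φ L)` uniformly in `L`, so no mass of `φ'` escapes to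
infinity and Helly's selection gives a uniform limit with the right value at infinity. -/
lemma GEplus_coercive (hum : 0 < um) (humup : um < up) (hup1 : up < 1) (hsum : 1 < um + up) {K : ℝ}
    (hn : ∀ n, MemXplus um up (un n) (φn n))
    (hK : ∀ n, GEplus um up (un n) (φn n) ≤ (K : EReal)) :
    ∃ σ : ℕ → ℕ, StrictMono σ ∧ ∃ u φ : ℝ → ℝ, MemXplus um up u φ ∧
      ConvXplus (fun n => un (σ n)) (fun n => φn (σ n)) u φ := by
  obtain ⟨δ, hδ, hδ'⟩ := exists_lam_ge hum humup hup1 hsum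
  set a := δ / 2 with hadef
  have ha : 0 < a := by linarith
  have hl : ∀ y ∈ Icc (phiOf um) (phiOf up), 2 * a * (phiOf up - y) ≤ lam up y := by
    intro y hy
    rw [hadef, mul_div_cancel₀ _ (two_ne_zero)]; exact hδ' y hy
  obtain ⟨B, hB⟩ : ∃ B : ℝ, ∀ n L, 0 ≤ L → a * (L * (phiOf up - φn n L)) ≤ B := by
    refine ⟨K + (phiOf up - phiOf um + ∫ x in Ioi (0:ℝ), Real.exp (-1 - a * x)), fun n L hL => ?_⟩
    have h1 := (JJ_le_GEplus hum humup hup1 ha hl (hn n) hL).trans (hK n)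
    rw [EReal.coe_le_coe_iff] at h1
    have h2 := (hn n).JJ_ge_psi hl hL
    have h3 := mul_le_mul_of_nonneg_left ((hn n).mul_psi_le hL) ha.le
    linarith
  -- weak-* compactness of the densities is extracted from compactness of their primitives
  have hUi : ∀ n {x y : ℝ}, 0 ≤ x → 0 ≤ y → IntervalIntegrable (un n) volume x y :=
    fun n x y hx hy => (hn n).ii_comp continuous_fst hx hy
  set U : ℕ → ℝ → ℝ := fun n x => ∫ t in (0:ℝ)..x, un n t with hU
  have hUm : ∀ n, M1 (U n) := by
    intro n x y hx hxy
    have e := intervalIntegral.integral_add_adjacent_intervals (hUi n le_rfl hx)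
      (hUi n hx (hx.trans hxy))
    have h1 : 0 ≤ ∫ t in x..y, un n t :=
      intervalIntegral.integral_nonneg hxy fun t ht => ((hn n).1.2 t (hx.trans ht.1)).1
    have h2 : ∫ t in x..y, un n t ≤ ∫ t in x..y, (1:ℝ) :=
      intervalIntegral.integral_mono_on hxy (hUi n hx (hx.trans hxy)) (by simp)
        fun t ht => ((hn n).1.2 t (hx.trans ht.1)).2
    simp only [intervalIntegral.integral_const, smul_eq_mul, mul_one] at h2
    simp only [hU]
    constructor <;> linarith
  have hUd : ∀ n, ∀ᵐ x ∂(volume.restrict (Ioi (0:ℝ))), deriv (U n) x = un n x := by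
    intro n
    rw [ae_restrict_iff' measurableSet_Ioi]
    have h1 := ae_all_iff.2 fun N : ℕ =>
      (hUi n (x := 0) (y := N) le_rfl (Nat.cast_nonneg N)).ae_hasDerivAt_integral
    filter_upwards [h1] with x hx hx0
    have hx0 : 0 < x := hx0
    obtain ⟨N, hN⟩ := exists_nat_ge x
    exact (hx N (by rw [uIcc_of_le (hx0.le.trans hN)]; exact ⟨hx0.le, hN⟩) 0 left_mem_uIcc).deriv
  obtain ⟨σ, hσ, φ, hφ, hφlim⟩ := helly (fun n => (hn n).m1) (fun n => (hn n).2.2.1)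
  obtain ⟨τ, hτ, V, hV, hVlim⟩ := helly (fn := fun n => U (σ n)) (c := 0) (fun n => hUm (σ n))
    (fun n => by simp [hU])
  have hφlim' : ∀ x, 0 ≤ x → Tendsto (fun n => φn (σ (τ n)) x) atTop (𝓝 (φ x)) :=
    fun x hx => (hφlim x hx).comp hτ.tendsto_atTop
  have hφup : ∀ x, 0 ≤ x → φ x ≤ phiOf up := fun x hx =>
    le_of_tendsto' (hφlim x hx) fun n => ((hn _).range hx).2
  have hφlo : ∀ x, 0 < x → phiOf up - B / a / x ≤ φ x := fun x hx =>
    ge_of_tendsto' (hφlim x hx.le) fun n => by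
      have := hB (σ n) x hx.le
      rw [sub_le_comm, div_div, le_div_iff₀ (by positivity)]
      linarith
  have h0 : φ 0 = phiOf um := tendsto_nhds_unique (hφlim 0 le_rfl)
    (by simp only [fun n => (hn n).2.2.1]; exact tendsto_const_nhds)
  have hdiv : Tendsto (fun x : ℝ => B / a / x) atTop (𝓝 0) := tendsto_id.const_div_atTop _
  have hφtop : Tendsto φ atTop (𝓝 (phiOf up)) := by
    have h1 : Tendsto (fun x : ℝ => phiOf up - B / a / x) atTop (𝓝 (phiOf up)) := by
      simpa using hdiv.const_sub (phiOf up)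
    refine tendsto_of_tendsto_of_tendsto_of_le_of_le' h1 tendsto_const_nhds ?_ ?_
    · filter_upwards [eventually_gt_atTop 0] with x hx using hφlo x hx
    · filter_upwards [eventually_ge_atTop 0] with x hx using hφup x hx
  refine ⟨σ ∘ τ, hσ.comp hτ, fun x => if 0 < x then deriv V x else 0, φ, ⟨⟨?_, ?_⟩, hφ, h0, hφtop⟩,
    ?_, ?_⟩
  · exact Measurable.ite measurableSet_Ioi (measurable_deriv V) measurable_const
  · intro x _
    simp only
    split_ifs with hx
    · exact hV.deriv_mem hx
    · simp
  · intro f hf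
    have h1 := weak_deriv (fun n => hUm (σ (τ n))) hV hVlim hf
    have e : ∫ x in Ioi (0:ℝ), (if 0 < x then deriv V x else 0) * f x =
        ∫ x in Ioi (0:ℝ), deriv V x * f x :=
      setIntegral_congr_fun measurableSet_Ioi fun x hx => by
        rw [if_pos (mem_Ioi.1 hx)]
    rw [e]
    refine h1.congr fun n => integral_congr_ae ?_
    filter_upwards [hUd (σ (τ n))] with x hx
    simp only [Function.comp]
    rw [hx]
  · refine uniform_of_pointwise (fun n => (hn _).m1) hφ hφlim' fun ε hε => ?_
    obtain ⟨M, hM1, hM0⟩ := ((hdiv.eventually (gt_mem_nhds hε)).and (eventually_gt_atTop 0)).exists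
    refine ⟨M, fun n x hx => ?_⟩
    have hx0 := hM0.trans_le hx
    have h1 := hB (σ (τ n)) x hx0.le
    have h2 : phiOf up - B / a / x ≤ φn (σ (τ n)) x := by
      rw [sub_le_comm, div_div, le_div_iff₀ (by positivity)]
      linarith
    have h3 := hφlo x hx0
    have h4 := hφup x hx0.le
    have h5 := ((hn (σ (τ n))).range hx0.le).2
    have h6 : B / a / x < ε := by
      have hBa : 0 ≤ B / a := by
        have := hB 0 0 le_rfl
        have : 0 ≤ B := by simpa using this
        positivity
      exact lt_of_le_of_lt (by gcongr) hM1
    simp only [Function.comp]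
    rw [abs_lt]
    constructor <;> linarith
end

/-! ### Calibration -/

/-- The slope of the minimizer as a function of its height: `φ̄` solves `φ' = qq φ`. -/
def qq (up y : ℝ) : ℝ := 1 - up * (1 - up) / (sg y * (1 - sg y))

/-- The calibration `s'(qq y)`. Subtracting the exact term `φ' hh(φ)` turns the integrand into a
sum of two relative entropies. At `y = φ₊` both logarithms vanish, the first one being `log 0`. -/
def hh (up y : ℝ) : ℝ := Real.log (qq up y) - Real.log (1 - qq up y)

lemma ww_pos (y : ℝ) : 0 < sg y * (1 - sg y) :=
  mul_pos (sg_pos y) (by linarith [sg_lt_one y])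

lemma qq_lt_one {up : ℝ} (h0 : 0 < up) (h1 : up < 1) (y : ℝ) : qq up y < 1 := by
  have : 0 < up * (1 - up) / (sg y * (1 - sg y)) :=
    div_pos (mul_pos h0 (by linarith)) (ww_pos y)
  unfold qq; linarith

lemma qq_phiOf {up : ℝ} (h0 : 0 < up) (h1 : up < 1) : qq up (phiOf up) = 0 := by
  have : 0 < up * (1 - up) := mul_pos h0 (by linarith)
  unfold qq; rw [sg_phiOf h0 h1, div_self this.ne', sub_self]

lemma hh_phiOf {up : ℝ} (h0 : 0 < up) (h1 : up < 1) : hh up (phiOf up) = 0 := by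
  simp [hh, qq_phiOf h0 h1]

lemma sg_mem {um up : ℝ} (hum : 0 < um) (humup : um < up) (hup1 : up < 1) {y : ℝ}
    (hy : y ∈ Icc (phiOf um) (phiOf up)) : sg y ∈ Icc um up := by
  have h3 := sg_mono hy.1
  have h4 := sg_mono hy.2
  rw [sg_phiOf hum (by linarith)] at h3
  rw [sg_phiOf (by linarith) hup1] at h4
  exact ⟨h3, h4⟩

lemma ww_ge {um up : ℝ} (hum : 0 < um) (humup : um < up) (hup1 : up < 1) (hsum : 1 < um + up)
    {y : ℝ} (hy : y ∈ Icc (phiOf um) (phiOf up)) : up * (1 - up) ≤ sg y * (1 - sg y) := by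
  have := sg_mem hum humup hup1 hy
  nlinarith [mul_nonneg (sub_nonneg.2 this.2) (by linarith [this.1] : 0 ≤ sg y + up - 1)]

lemma qq_nonneg {um up : ℝ} (hum : 0 < um) (humup : um < up) (hup1 : up < 1) (hsum : 1 < um + up)
    {y : ℝ} (hy : y ∈ Icc (phiOf um) (phiOf up)) : 0 ≤ qq up y := by
  have := (div_le_one (ww_pos y)).2 (ww_ge hum humup hup1 hsum hy)
  unfold qq; linarith

lemma qq_pos {um up : ℝ} (hum : 0 < um) (humup : um < up) (hup1 : up < 1) (hsum : 1 < um + up)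
    {y : ℝ} (hy : y ∈ Ico (phiOf um) (phiOf up)) : 0 < qq up y := by
  have h1 := sg_mem hum humup hup1 ⟨hy.1, hy.2.le⟩
  have h2 : sg y < up := by
    refine lt_of_le_of_ne h1.2 fun e => ?_
    have := phiOf_sg y
    rw [e] at this
    linarith [hy.2]
  have := (div_lt_one (ww_pos y)).2 (show up * (1 - up) < sg y * (1 - sg y) by
    nlinarith [mul_pos (sub_pos.2 h2) (by linarith [h1.1] : 0 < sg y + up - 1)])
  unfold qq; linarith

lemma continuous_qq (up : ℝ) : Continuous (qq up) :=
  continuous_const.sub (continuous_const.div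
    (continuous_sg.mul (continuous_const.sub continuous_sg)) fun y => (ww_pos y).ne')

lemma lam_eq_qq {up : ℝ} (h0 : 0 < up) (h1 : up < 1) (y : ℝ) :
    lam up y = - Real.log (1 - qq up y) := by
  have : 0 < up * (1 - up) := mul_pos h0 (by linarith)
  rw [lam_eq]; unfold qq
  rw [sub_sub_cancel, Real.log_div this.ne' (ww_pos y).ne']; ring

lemma calib_ge {um up : ℝ} (hum : 0 < um) (humup : um < up) (hup1 : up < 1) (hsum : 1 < um + up)
    {y p : ℝ} (hy : y ∈ Ico (phiOf um) (phiOf up)) (hp : p ∈ Icc (0:ℝ) 1) :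
    (p - qq up y) ^ 2 / 2 ≤ S p + lam up y - p * hh up y := by
  have h1 := gibbs hp (qq_pos hum humup hup1 hsum hy) (qq_lt_one (by linarith) hup1 y)
  rw [lam_eq_qq (by linarith) hup1]; unfold hh
  linarith

lemma calib_eq {up : ℝ} (h0 : 0 < up) (h1 : up < 1) (y : ℝ) :
    S (qq up y) + lam up y - qq up y * hh up y = 0 := by
  rw [lam_eq_qq h0 h1]; unfold hh S; ring

lemma qq_lipschitz {um up : ℝ} (hum : 0 < um) (humup : um < up) (hup1 : up < 1)
    (hsum : 1 < um + up) :
    LipschitzOnWith (Real.toNNReal (1 / (up * (1 - up)))) (qq up) (Icc (phiOf um) (phiOf up)) := by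
  have hc : 0 < up * (1 - up) := mul_pos (by linarith) (by linarith)
  apply LipschitzOnWith.of_dist_le_mul
  intro x hx y hy
  have wx := ww_ge hum humup hup1 hsum hx
  have wy := ww_ge hum humup hup1 hsum hy
  rw [Real.coe_toNNReal _ (by positivity), Real.dist_eq, Real.dist_eq]
  have e : qq up x - qq up y = up * (1 - up) * ((sg x - sg y) * (1 - sg x - sg y)) /
      ((sg x * (1 - sg x)) * (sg y * (1 - sg y))) := by
    have h1 := (ww_pos x).ne'
    have h2 := (ww_pos y).ne'
    unfold qq
    rw [sub_sub_sub_cancel_left, div_sub_div _ _ h2 h1]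
    congr 1 <;> ring
  have h3 : |sg x - sg y| ≤ |x - y| := by
    rcases le_total x y with h | h
    · rw [abs_sub_comm, abs_sub_comm x, abs_of_nonneg (sub_nonneg.2 (sg_mono h)),
        abs_of_nonneg (sub_nonneg.2 h)]
      exact sg_lipschitz h
    · rw [abs_of_nonneg (sub_nonneg.2 (sg_mono h)), abs_of_nonneg (sub_nonneg.2 h)]
      exact sg_lipschitz h
  have h4 : |1 - sg x - sg y| ≤ 1 := by
    rw [abs_le]
    constructor <;> linarith [sg_pos x, sg_pos y, sg_lt_one x, sg_lt_one y]
  rw [e, abs_div, abs_mul (up * (1 - up)), abs_mul (sg x - sg y), abs_of_pos hc,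
    abs_of_pos (mul_pos (ww_pos x) (ww_pos y))]
  calc _ ≤ up * (1 - up) * (|x - y| * 1) / ((up * (1 - up)) * (up * (1 - up))) := by
        gcongr
        exact (ww_pos x).le
    _ = _ := by field_simp

/-- Change of variables along a monotone Lipschitz function. -/
lemma M1.integral_comp {f : ℝ → ℝ} (hf : M1 f) {h : ℝ → ℝ} (hh : Continuous h) {C : ℝ}
    (hC : ∀ y, |h y| ≤ C) {L : ℝ} (hL : 0 ≤ L) :
    ∫ x in (0:ℝ)..L, deriv f x * h (f x) = ∫ y in (f 0)..(f L), h y := by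
  set H : ℝ → ℝ := fun z => ∫ y in (f 0)..z, h y with hH
  have hd : ∀ z, HasDerivAt H (h z) z := fun z =>
    intervalIntegral.integral_hasDerivAt_right (hh.intervalIntegrable _ _)
      hh.aestronglyMeasurable.stronglyMeasurableAtFilter hh.continuousAt
  have hC0 : 0 ≤ C := (abs_nonneg _).trans (hC 0)
  have hlip : LipschitzWith C.toNNReal H := by
    refine lipschitzWith_of_nnnorm_deriv_le (fun z => (hd z).differentiableAt) fun z => ?_
    rw [(hd z).deriv, ← NNReal.coe_le_coe, coe_nnnorm, Real.coe_toNNReal _ hC0]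
    exact hC z
  have hac : AbsolutelyContinuousOnInterval (H ∘ f) 0 L :=
    (hlip.comp_lipschitzOnWith (hf.lipOn.mono (uIcc_subset_Ici le_rfl hL))).absolutelyContinuousOnInterval
  have h1 := hac.integral_deriv_eq_sub
  have h2 : (H ∘ f) L - (H ∘ f) 0 = ∫ y in (f 0)..(f L), h y := by simp [hH]
  rw [← h2, ← h1]
  refine intervalIntegral.integral_congr_ae ?_
  filter_upwards [hf.ae_diff] with x hx hx0
  rw [uIoc_of_le hL] at hx0
  rw [((hd (f x)).comp x (hx hx0.1).hasDerivAt).deriv, mul_comm]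

section
variable {um up : ℝ} {u φ : ℝ → ℝ}

lemma MemXplus.deriv_zero (h : MemXplus um up u φ) {x : ℝ} (hx : 0 < x) (e : φ x = phiOf up) :
    deriv φ x = 0 := by
  refine IsLocalMax.deriv_eq_zero ?_
  filter_upwards [Ioi_mem_nhds hx] with y hy
  rw [e]; exact (h.range (le_of_lt hy)).2

/-- The calibrated integrand dominates the squared defects in the two Euler-Lagrange equations
`u = sg φ` and `φ' = qq φ`. -/
lemma MemXplus.calib (h : MemXplus um up u φ) (hum : 0 < um) (humup : um < up) (hup1 : up < 1)
    (hsum : 1 < um + up) {x : ℝ} (hx : 0 < x) :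
    (u x - sg (φ x)) ^ 2 / 2 + (deriv φ x - qq up (φ x)) ^ 2 / 2 ≤
      FF up u φ x - deriv φ x * hh up (φ x) := by
  have h1 := DD_ge (h.umem hx) (φ x)
  have hr := h.range hx.le
  rcases hr.2.eq_or_lt with e | hlt
  · have h2 := h.deriv_zero hx e
    have h3 : lam up (phiOf up) = 0 := by rw [lam_phiOf (by linarith) hup1]; ring
    unfold FF
    rw [h2, e, h3, S_zero, qq_phiOf (by linarith) hup1, ← e]
    linarith
  · have h2 := calib_ge hum humup hup1 hsum ⟨hr.1, hlt⟩ (h.m1.deriv_mem hx)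
    unfold FF
    linarith

/-- The integral of the calibration, which depends on `φ` through the final height only. -/
lemma MemXplus.int_hh (h : MemXplus um up u φ) (hum : 0 < um) (humup : um < up) (hup1 : up < 1)
    (hsum : 1 < um + up) {L : ℝ} (hL : 0 ≤ L) (hlt : φ L < phiOf up) :
    IntervalIntegrable (fun x => deriv φ x * hh up (φ x)) volume 0 L ∧
    ∫ x in (0:ℝ)..L, deriv φ x * hh up (φ x) = ∫ y in (phiOf um)..(φ L), hh up y := by
  -- truncating the height below `φ₊` makes the calibration continuous and bounded
  set cl : ℝ → ℝ := fun y => max (phiOf um) (min y (φ L)) with hcl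
  have hφL := (h.range hL).1
  have hmem : ∀ y, cl y ∈ Icc (phiOf um) (φ L) := fun y =>
    ⟨le_max_left _ _, max_le hφL (min_le_right _ _)⟩
  have hid : ∀ y ∈ Icc (phiOf um) (φ L), cl y = y := fun y hy => by
    simp only [hcl]; rw [min_eq_left hy.2, max_eq_right hy.1]
  have hclc : Continuous cl := by fun_prop
  have hqpos : ∀ y, 0 < qq up (cl y) := fun y =>
    qq_pos hum humup hup1 hsum ⟨(hmem y).1, (hmem y).2.trans_lt hlt⟩
  have hc : Continuous fun y => hh up (cl y) := by
    have hq := (continuous_qq up).comp hclc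
    exact (hq.log fun y => (hqpos y).ne').sub ((continuous_const.sub hq).log fun y =>
      (sub_pos.2 (qq_lt_one (by linarith) hup1 (cl y))).ne')
  obtain ⟨C, hC⟩ := isCompact_Icc.exists_bound_of_continuousOn
    (hc.continuousOn (s := Icc (phiOf um) (φ L)))
  have hC' : ∀ y, |hh up (cl y)| ≤ C := fun y => by
    have := hC (cl y) (hmem y)
    rwa [hid _ (hmem y)] at this
  have hφm : ∀ x, 0 ≤ x → x ≤ L → φ x ∈ Icc (phiOf um) (φ L) := fun x hx hxL =>
    ⟨(h.range hx).1, (h.m1 x L hx hxL).1⟩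
  have e1 := h.m1.integral_comp hc hC' hL
  have e2 : EqOn (fun x => deriv φ x * hh up (cl (φ x))) (fun x => deriv φ x * hh up (φ x))
      (uIcc 0 L) := fun x hx => by
    rw [uIcc_of_le hL] at hx
    simp only
    rw [hid _ (hφm x hx.1 hx.2)]
  have e3 : EqOn (fun y => hh up (cl y)) (hh up) (uIcc (phiOf um) (φ L)) := fun y hy => by
    rw [uIcc_of_le hφL] at hy
    simp only
    rw [hid _ hy]
  rw [h.2.2.1, intervalIntegral.integral_congr e2, intervalIntegral.integral_congr e3] at e1
  refine ⟨?_, e1⟩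
  refine ((h.m1.ii_deriv le_rfl hL).mul_continuousOn (g := fun x => hh up (cl (φ x)))
    (hc.comp_continuousOn (h.m1.cont.mono (uIcc_subset_Ici le_rfl hL)))).congr ?_
  intro x hx
  exact e2 (uIoc_subset_uIcc hx)

/-- A sequence of heights increasing to `φ₊`. -/
def lev (um up : ℝ) (n : ℕ) : ℝ := phiOf up - (phiOf up - phiOf um) / (n + 1)

lemma lev_mem (hlt : phiOf um < phiOf up) (n : ℕ) : lev um up n ∈ Ico (phiOf um) (phiOf up) := by
  have h1 : 0 < phiOf up - phiOf um := by linarith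
  have h2 : 0 < (phiOf up - phiOf um) / (n + 1) := by positivity
  have h3 : (phiOf up - phiOf um) / (n + 1) ≤ phiOf up - phiOf um :=
    div_le_self h1.le (by linarith [(Nat.cast_nonneg n : (0:ℝ) ≤ n)])
  unfold lev; constructor <;> linarith

lemma lev_strictMono (hlt : phiOf um < phiOf up) : StrictMono (lev um up) := by
  intro m n hmn
  have h1 : 0 < phiOf up - phiOf um := by linarith
  have h2 : (m:ℝ) < n := by exact_mod_cast hmn
  have : (phiOf up - phiOf um) / (n + 1) < (phiOf up - phiOf um) / (m + 1) := by gcongr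
  unfold lev; linarith

lemma lev_tendsto (um up : ℝ) : Tendsto (lev um up) atTop (𝓝 (phiOf up)) := by
  have : Tendsto (fun n : ℕ => (phiOf up - phiOf um) / ((n:ℝ) + 1)) atTop (𝓝 0) :=
    (tendsto_natCast_atTop_atTop.atTop_add tendsto_const_nhds).const_div_atTop _
  have h2 := this.const_sub (phiOf up)
  rw [sub_zero] at h2
  exact h2

/-- Times at which `φ` reaches the heights `lev n`; they exhaust `{φ < φ₊}`. -/
lemma MemXplus.exists_levels (h : MemXplus um up u φ) (hlt : phiOf um < phiOf up) :
    ∃ L : ℕ → ℝ, Monotone L ∧ (∀ n, 0 ≤ L n) ∧ (∀ n, φ (L n) = lev um up n) ∧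
      ∀ x, 0 ≤ x → φ x < phiOf up → ∃ n, x ≤ L n := by
  have hex : ∀ n, ∃ x, 0 ≤ x ∧ φ x = lev um up n := by
    intro n
    have hm := lev_mem hlt n
    obtain ⟨M, hM, hM0⟩ := ((h.2.2.2.eventually (lt_mem_nhds hm.2)).and (eventually_ge_atTop 0)).exists
    obtain ⟨x, hx, hx2⟩ := intermediate_value_Icc hM0 (h.m1.cont.mono Icc_subset_Ici_self)
      (show lev um up n ∈ Icc (φ 0) (φ M) from ⟨by rw [h.2.2.1]; exact hm.1, hM.le⟩)
    exact ⟨x, hx.1, hx2⟩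
  choose L hL0 hL using hex
  refine ⟨L, monotone_nat_of_le_succ fun n => ?_, hL0, hL, fun x hx hlt' => ?_⟩
  · by_contra! hcon
    have := (h.m1 _ _ (hL0 _) hcon.le).1
    rw [hL, hL] at this
    exact absurd (lev_strictMono hlt n.lt_succ_self) (not_lt.2 this)
  · obtain ⟨n, hn⟩ := ((lev_tendsto um up).eventually (lt_mem_nhds hlt')).exists
    refine ⟨n, ?_⟩
    by_contra! hcon
    have := (h.m1 _ _ (hL0 _) hcon.le).1
    rw [hL] at this
    linarith

/-- The integral over the times where `φ < φ₊` is at most the full integral: beyond them the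
integrand is a relative entropy. -/
lemma MemXplus.exists_limit (h : MemXplus um up u φ) (hum : 0 < um) (humup : um < up)
    (hup1 : up < 1) (hsum : 1 < um + up) (hd : Dom up u φ) {L : ℕ → ℝ} (hLm : Monotone L)
    (hL0 : ∀ n, 0 ≤ L n) (hLx : ∀ x, 0 ≤ x → φ x < phiOf up → ∃ n, x ≤ L n) :
    ∃ I, Tendsto (fun n => ∫ x in (0:ℝ)..(L n), FF up u φ x) atTop (𝓝 I) ∧
      I ≤ ∫ x in Ioi (0:ℝ), FF up u φ x ∧
      ((∀ x, 0 ≤ x → φ x < phiOf up) → I = ∫ x in Ioi (0:ℝ), FF up u φ x) := by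
  have hF := (h.integrable_FF hum humup hup1 hd).1
  have hsub : (⋃ n, Ioc 0 (L n)) ⊆ Ioi 0 := iUnion_subset fun n => Ioc_subset_Ioi_self
  have hmU : MeasurableSet (⋃ n, Ioc 0 (L n)) := MeasurableSet.iUnion fun n => measurableSet_Ioc
  refine ⟨∫ x in ⋃ n, Ioc 0 (L n), FF up u φ x, ?_, ?_, fun hall => ?_⟩
  · have := tendsto_setIntegral_of_monotone (μ := volume) (fun n => measurableSet_Ioc)
      (fun m n hmn => Ioc_subset_Ioc_right (hLm hmn)) (hF.mono_set hsub)
    refine this.congr fun n => ?_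
    rw [intervalIntegral.integral_of_le (hL0 n)]
  · rw [← integral_inter_add_sdiff hmU hF, inter_eq_right.2 hsub, le_add_iff_nonneg_right]
    refine setIntegral_nonneg (measurableSet_Ioi.diff hmU) fun x hx => ?_
    have hx0 : 0 < x := hx.1
    have e : φ x = phiOf up := by
      refine le_antisymm (h.range hx0.le).2 ?_
      by_contra! hcon
      obtain ⟨n, hn⟩ := hLx x hx0.le hcon
      exact hx.2 (mem_iUnion.2 ⟨n, hx0, hn⟩)
    have h1 := h.calib hum humup hup1 hsum hx0
    rw [h.deriv_zero hx0 e, zero_mul] at h1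
    nlinarith [sq_nonneg (u x - sg (φ x)), sq_nonneg (0 - qq up (φ x))]
  · congr 2
    refine Subset.antisymm hsub fun x hx => ?_
    obtain ⟨n, hn⟩ := hLx x (le_of_lt hx) (hall x (le_of_lt hx))
    exact mem_iUnion.2 ⟨n, hx, hn⟩

/-- The calibration argument. The heights `lev n` are reached by every competitor, so the exact
part of the integral is common to all of them, and what is left is a sum of squares. -/
lemma calibration (hum : 0 < um) (humup : um < up)
    (hup1 : up < 1) (hsum : 1 < um + up) {ub φb : ℝ → ℝ} (hb : MemXplus um up ub φb)
    (hbd : Dom up ub φb) (hb1 : ∀ x, 0 ≤ x → φb x < phiOf up)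
    (hb2 : ∀ x, 0 ≤ x → ub x = sg (φb x)) (hb3 : ∀ x, 0 < x → deriv φb x = qq up (φb x))
    (h : MemXplus um up u φ) (hd : Dom up u φ) :
    ∫ x in Ioi (0:ℝ), FF up ub φb x ≤ ∫ x in Ioi (0:ℝ), FF up u φ x ∧
    (∫ x in Ioi (0:ℝ), FF up u φ x = ∫ x in Ioi (0:ℝ), FF up ub φb x →
      (∀ᵐ x ∂(volume.restrict (Ioi (0:ℝ))), deriv φ x = qq up (φ x)) ∧
      ∀ᵐ x ∂(volume.restrict (Ioi (0:ℝ))), φ x < phiOf up → u x = sg (φ x)) := by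
  have hup0 : 0 < up := by linarith
  have hlt := phiOf_lt hum humup hup1
  obtain ⟨Lb, hLbm, hLb0, hLb, hLbx⟩ := hb.exists_levels hlt
  obtain ⟨Ib, hIb, -, hIb2⟩ := hb.exists_limit hum humup hup1 hsum hbd hLbm hLb0 hLbx
  rw [hIb2 hb1] at hIb
  obtain ⟨L, hLm, hL0, hL, hLx⟩ := h.exists_levels hlt
  obtain ⟨I, hI, hI1, -⟩ := h.exists_limit hum humup hup1 hsum hd hLm hL0 hLx
  have hH : Tendsto (fun n => ∫ y in (phiOf um)..(lev um up n), hh up y) atTop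
      (𝓝 (∫ x in Ioi (0:ℝ), FF up ub φb x)) := by
    refine hIb.congr fun n => ?_
    have e := (hb.int_hh hum humup hup1 hsum (hLb0 n) (by rw [hLb]; exact (lev_mem hlt n).2)).2
    rw [hLb] at e
    rw [← e, intervalIntegral.integral_of_le (hLb0 n), intervalIntegral.integral_of_le (hLb0 n)]
    refine setIntegral_congr_fun measurableSet_Ioc fun x hx => ?_
    have h1 := calib_eq hup0 hup1 (φb x)
    simp only [FF]
    rw [hb3 x hx.1, hb2 x hx.1.le, DD_sg]
    linarith
  set N : ℝ → ℝ := fun x => FF up u φ x - deriv φ x * hh up (φ x) with hN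
  have hN0 : ∀ x, 0 < x → 0 ≤ N x := fun x hx =>
    le_trans (by positivity) (h.calib hum humup hup1 hsum hx)
  have hhn := fun n => h.int_hh hum humup hup1 hsum (hL0 n) (by rw [hL]; exact (lev_mem hlt n).2)
  have hNi : ∀ n, IntervalIntegrable N volume 0 (L n) := fun n =>
    (h.ii_FF le_rfl (hL0 n)).sub (hhn n).1
  have hNe : ∀ n, ∫ x in (0:ℝ)..(L n), N x =
      (∫ x in (0:ℝ)..(L n), FF up u φ x) - ∫ y in (phiOf um)..(lev um up n), hh up y := by
    intro n
    rw [← hL n, ← (hhn n).2]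
    exact intervalIntegral.integral_sub (h.ii_FF le_rfl (hL0 n)) (hhn n).1
  have hNt := hI.sub hH
  simp only [← hNe] at hNt
  have hNn : ∀ n, 0 ≤ ∫ x in (0:ℝ)..(L n), N x := fun n => by
    rw [intervalIntegral.integral_of_le (hL0 n)]
    exact setIntegral_nonneg measurableSet_Ioc fun x hx => hN0 x hx.1
  have hge := ge_of_tendsto' hNt hNn
  refine ⟨by linarith, fun heq => ?_⟩
  have hNmono : Monotone fun n => ∫ x in (0:ℝ)..(L n), N x := by
    intro m n hmn
    simp only
    rw [intervalIntegral.integral_of_le (hL0 m), intervalIntegral.integral_of_le (hL0 n)]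
    exact setIntegral_mono_set (hNi n).1
      ((ae_restrict_mem measurableSet_Ioc).mono fun x hx => hN0 x hx.1)
      (Ioc_subset_Ioc_right (hLm hmn)).eventuallyLE
  have hNz : ∀ n, ∫ x in (0:ℝ)..(L n), N x = 0 := fun n => by
    have := hNmono.ge_of_tendsto hNt n
    linarith [hNn n]
  have hae : ∀ᵐ x, ∀ n, x ∈ Ioc 0 (L n) → N x = 0 := by
    rw [ae_all_iff]
    intro n
    have h1 := hNz n
    rw [intervalIntegral.integral_of_le (hL0 n), setIntegral_eq_zero_iff_of_nonneg_ae
      ((ae_restrict_mem measurableSet_Ioc).mono fun x hx => hN0 x hx.1) (hNi n).1,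
      Filter.EventuallyEq, ae_restrict_iff' measurableSet_Ioc] at h1
    simpa using h1
  have hdef : ∀ᵐ x ∂(volume.restrict (Ioi (0:ℝ))), φ x < phiOf up →
      u x = sg (φ x) ∧ deriv φ x = qq up (φ x) := by
    rw [ae_restrict_iff' measurableSet_Ioi]
    filter_upwards [hae] with x hx hx0 hxlt
    have hx0 : 0 < x := hx0
    obtain ⟨n, hn⟩ := hLx x hx0.le hxlt
    have h1 : N x = 0 := hx n ⟨hx0, hn⟩
    have h2 := h.calib hum humup hup1 hsum hx0
    have h2' : (u x - sg (φ x)) ^ 2 / 2 + (deriv φ x - qq up (φ x)) ^ 2 / 2 ≤ N x := h2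
    rw [h1] at h2'
    constructor
    · have : (u x - sg (φ x)) ^ 2 = 0 := le_antisymm
        (by nlinarith [sq_nonneg (deriv φ x - qq up (φ x))]) (sq_nonneg _)
      exact sub_eq_zero.1 (pow_eq_zero_iff two_ne_zero |>.1 this)
    · have : (deriv φ x - qq up (φ x)) ^ 2 = 0 := le_antisymm
        (by nlinarith [sq_nonneg (u x - sg (φ x))]) (sq_nonneg _)
      exact sub_eq_zero.1 (pow_eq_zero_iff two_ne_zero |>.1 this)
  refine ⟨?_, hdef.mono fun x hx hxlt => (hx hxlt).1⟩
  filter_upwards [hdef, ae_restrict_mem measurableSet_Ioi] with x hx hx0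
  rcases (h.range (le_of_lt hx0)).2.eq_or_lt with e | hxlt
  · rw [h.deriv_zero hx0 e, e, qq_phiOf hup0 hup1]
  · exact (hx hxlt).2

/-- A solution almost everywhere is a solution everywhere, as `φ` is the primitive of its slope. -/
lemma MemXplus.right_deriv (h : MemXplus um up u φ)
    (hq : ∀ᵐ x ∂(volume.restrict (Ioi (0:ℝ))), deriv φ x = qq up (φ x)) {t : ℝ} (ht : 0 ≤ t) :
    HasDerivWithinAt φ (qq up (φ t)) (Ici t) t := by
  have hc : Continuous fun x => φ (max x 0) :=
    h.m1.cont.comp_continuous (by fun_prop) fun x => mem_Ici.2 (le_max_right _ _)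
  have hF : Continuous fun x => qq up (φ (max x 0)) := (continuous_qq up).comp hc
  have hd : HasDerivAt (fun z => φ 0 + ∫ x in (0:ℝ)..z, qq up (φ (max x 0)))
      (qq up (φ (max t 0))) t :=
    (intervalIntegral.integral_hasDerivAt_right (hF.intervalIntegrable _ _)
      hF.aestronglyMeasurable.stronglyMeasurableAtFilter hF.continuousAt).const_add _
  rw [max_eq_left ht] at hd
  have e : ∀ z, 0 ≤ z → φ z = φ 0 + ∫ x in (0:ℝ)..z, qq up (φ (max x 0)) := by
    intro z hz
    have h1 := h.m1.integral le_rfl hz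
    have h2 : ∫ x in (0:ℝ)..z, qq up (φ (max x 0)) = ∫ x in (0:ℝ)..z, deriv φ x := by
      refine intervalIntegral.integral_congr_ae ?_
      rw [ae_restrict_iff' measurableSet_Ioi] at hq
      filter_upwards [hq] with x hx hx0
      rw [uIoc_of_le hz] at hx0
      rw [hx hx0.1, max_eq_left hx0.1.le]
    rw [h2, h1]; ring
  exact hd.hasDerivWithinAt.congr (fun y hy => e y (ht.trans hy)) (e t ht)

/-- Uniqueness for the Lipschitz differential equation `φ' = qq φ`. -/
lemma ode_unique (hum : 0 < um) (humup : um < up)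
    (hup1 : up < 1) (hsum : 1 < um + up) {ub φb : ℝ → ℝ} (hb : MemXplus um up ub φb)
    (h : MemXplus um up u φ)
    (hqb : ∀ᵐ x ∂(volume.restrict (Ioi (0:ℝ))), deriv φb x = qq up (φb x))
    (hq : ∀ᵐ x ∂(volume.restrict (Ioi (0:ℝ))), deriv φ x = qq up (φ x)) {x : ℝ} (hx : 0 ≤ x) :
    φ x = φb x :=
  ODE_solution_unique_of_mem_Icc_right (v := fun _ => qq up)
    (s := fun _ => Icc (phiOf um) (phiOf up)) (a := 0) (b := x)
    (fun _ _ => qq_lipschitz hum humup hup1 hsum)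
    (h.m1.cont.mono Icc_subset_Ici_self) (fun t ht => h.right_deriv hq ht.1)
    (fun t ht => h.range ht.1)
    (hb.m1.cont.mono Icc_subset_Ici_self) (fun t ht => hb.right_deriv hqb ht.1)
    (fun t ht => hb.range ht.1) (by rw [h.2.2.1, hb.2.2.1]) ⟨hx, le_rfl⟩

end

/-! ### The explicit minimizer -/

lemma hasDerivAt_tanh' (x : ℝ) : HasDerivAt Real.tanh (1 - Real.tanh x ^ 2) x := by
  have h := (Real.hasDerivAt_sinh x).div (Real.hasDerivAt_cosh x) (Real.cosh_pos x).ne'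
  have e : (Real.sinh / Real.cosh : ℝ → ℝ) = Real.tanh :=
    funext fun y => (Real.tanh_eq_sinh_div_cosh y).symm
  rw [e] at h
  refine h.congr_deriv ?_
  have := (Real.cosh_pos x).ne'
  rw [Real.tanh_eq_sinh_div_cosh]
  field_simp

lemma tendsto_tanh : Tendsto Real.tanh atTop (𝓝 1) := by
  have e : ∀ y : ℝ, Real.tanh y = 1 - 2 / (Real.exp (2 * y) + 1) := by
    intro y
    have h2 : Real.exp (2 * y) = Real.exp y * Real.exp y := by rw [← Real.exp_add]; ring_nf
    rw [Real.tanh_eq, Real.exp_neg, h2]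
    have := Real.exp_pos y
    field_simp
    ring
  rw [funext e]
  have h1 : Tendsto (fun y : ℝ => Real.exp (2 * y) + 1) atTop atTop :=
    tendsto_atTop_add_const_right _ _
      (Real.tendsto_exp_atTop.comp (tendsto_id.const_mul_atTop (by norm_num : (0:ℝ) < 2)))
  simpa using (h1.const_div_atTop 2).const_sub 1

/-- The profile `1/2 + (u₊ - 1/2) tanh((u₊ - 1/2)(x - x0))`. -/
def ub (up x0 x : ℝ) : ℝ := 1/2 + (up - 1/2) * Real.tanh ((up - 1/2) * (x - x0))

lemma ub_mem {up : ℝ} (h : 1/2 < up) (x0 x : ℝ) : ub up x0 x ∈ Ioo (1 - up) up := by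
  have h1 := Real.neg_one_lt_tanh ((up - 1/2) * (x - x0))
  have h2 := Real.tanh_lt_one ((up - 1/2) * (x - x0))
  unfold ub
  constructor <;> nlinarith

lemma hasDerivAt_ub (up x0 x : ℝ) :
    HasDerivAt (ub up x0) (ub up x0 x * (1 - ub up x0 x) - up * (1 - up)) x := by
  have h1 : HasDerivAt (fun x => (up - 1/2) * (x - x0)) ((up - 1/2) * 1) x :=
    ((hasDerivAt_id x).sub_const x0).const_mul _
  have h2 := (((hasDerivAt_tanh' ((up - 1/2) * (x - x0))).comp x h1).const_mul
    (up - 1/2)).const_add (1/2)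
  refine h2.congr_deriv ?_
  unfold ub
  ring

lemma tendsto_ub {up : ℝ} (h : 1/2 < up) (x0 : ℝ) : Tendsto (ub up x0) atTop (𝓝 up) := by
  have h1 : Tendsto (fun x => (up - 1/2) * (x - x0)) atTop atTop :=
    (tendsto_atTop_add_const_right _ (-x0) tendsto_id).const_mul_atTop (by linarith)
  have h2 := ((tendsto_tanh.comp h1).const_mul (up - 1/2)).const_add (1/2)
  rw [show 1/2 + (up - 1/2) * 1 = up by ring] at h2
  exact h2

lemma exists_ub {um up : ℝ} (humup : um < up) (hsum : 1 < um + up) : ∃ x0, ub up x0 0 = um := by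
  have hA : 0 < up - 1/2 := by linarith
  refine ⟨-(Real.artanh ((um - 1/2) / (up - 1/2)) / (up - 1/2)), ?_⟩
  have hm : (um - 1/2) / (up - 1/2) ∈ Ioo (-1:ℝ) 1 :=
    ⟨by rw [lt_div_iff₀ hA]; linarith, by rw [div_lt_one hA]; linarith⟩
  unfold ub
  rw [zero_sub, neg_neg, mul_div_cancel₀ _ hA.ne', Real.tanh_artanh hm,
    mul_div_cancel₀ _ hA.ne']
  ring

section profile

variable {um up x0 : ℝ}

/-- The height `s'(ū)` of the profile. -/
def pb (up x0 x : ℝ) : ℝ := phiOf (ub up x0 x)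

lemma ub_unit (h : 1/2 < up) (h1 : up < 1) (x0 x : ℝ) : 0 < ub up x0 x ∧ ub up x0 x < 1 := by
  have := ub_mem h x0 x
  exact ⟨by linarith [this.1], by linarith [this.2]⟩

lemma sg_pb (h : 1/2 < up) (h1 : up < 1) (x0 x : ℝ) : sg (pb up x0 x) = ub up x0 x :=
  sg_phiOf (ub_unit h h1 x0 x).1 (ub_unit h h1 x0 x).2

lemma hasDerivAt_phiOf {v : ℝ} (h0 : 0 < v) (h1 : v < 1) :
    HasDerivAt phiOf (1 / (v * (1 - v))) v := by
  have h2 : 0 < 1 - v := by linarith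
  have h := ((hasDerivAt_id v).div ((hasDerivAt_id v).const_sub 1) h2.ne').log
    (div_pos h0 h2).ne'
  refine h.congr_deriv ?_
  simp only [id, Pi.div_apply]
  field_simp
  ring

lemma hasDerivAt_pb (h : 1/2 < up) (h1 : up < 1) (x0 x : ℝ) :
    HasDerivAt (pb up x0) (qq up (pb up x0 x)) x := by
  have hu := ub_unit h h1 x0 x
  refine ((hasDerivAt_phiOf hu.1 hu.2).comp x (hasDerivAt_ub up x0 x)).congr_deriv ?_
  have h2 : 0 < 1 - ub up x0 x := by linarith
  unfold qq
  rw [sg_pb h h1]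
  have := hu.1
  field_simp

lemma pb_slope (h : 1/2 < up) (h1 : up < 1) (x0 x : ℝ) :
    qq up (pb up x0 x) ∈ Icc (0:ℝ) 1 := by
  refine ⟨?_, (qq_lt_one (by linarith) h1 _).le⟩
  have hm := ub_mem h x0 x
  have hw := ww_pos (pb up x0 x)
  have : up * (1 - up) / (sg (pb up x0 x) * (1 - sg (pb up x0 x))) ≤ 1 := by
    rw [div_le_one hw, sg_pb h h1]
    nlinarith [mul_pos (sub_pos.2 hm.1) (sub_pos.2 hm.2)]
  unfold qq; linarith

lemma pb_lt (h : 1/2 < up) (h1 : up < 1) (x0 x : ℝ) : pb up x0 x < phiOf up :=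
  phiOf_lt (ub_unit h h1 x0 x).1 (ub_mem h x0 x).2 h1

lemma continuous_ub (up x0 : ℝ) : Continuous (ub up x0) :=
  continuous_iff_continuousAt.2 fun x => (hasDerivAt_ub up x0 x).continuousAt

lemma pb_memX (h : 1/2 < up) (h1 : up < 1) (h0 : ub up x0 0 = um) :
    MemXplus um up (ub up x0) (pb up x0) := by
  refine ⟨⟨(continuous_ub up x0).measurable, fun x _ =>
    ⟨(ub_unit h h1 x0 x).1.le, (ub_unit h h1 x0 x).2.le⟩⟩, ?_, ?_, ?_⟩
  · intro x y _ hxy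
    have hd := hasDerivAt_pb h h1 x0
    have m1 : Monotone (pb up x0) := monotone_of_deriv_nonneg
      (fun x => (hd x).differentiableAt) fun x => by
        rw [(hd x).deriv]; exact (pb_slope h h1 x0 x).1
    have hd2 : ∀ x, HasDerivAt (fun x => x - pb up x0 x) (1 - qq up (pb up x0 x)) x := fun x =>
      (hasDerivAt_id x).sub (hd x)
    have m2 : Monotone fun x => x - pb up x0 x := monotone_of_deriv_nonneg
      (fun x => (hd2 x).differentiableAt) fun x => by
        rw [(hd2 x).deriv]; linarith [(pb_slope h h1 x0 x).2]
    have h3 := m2 hxy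
    simp only at h3
    exact ⟨m1 hxy, by linarith⟩
  · unfold pb; rw [h0]
  · exact (hasDerivAt_phiOf (by linarith) h1).continuousAt.tendsto.comp (tendsto_ub h x0)

lemma ub_mono (h : 1/2 < up) (x0 : ℝ) : Monotone (ub up x0) :=
  monotone_of_deriv_nonneg (fun x => (hasDerivAt_ub up x0 x).differentiableAt) fun x => by
    rw [(hasDerivAt_ub up x0 x).deriv]
    have hm := ub_mem h x0 x
    nlinarith [mul_pos (sub_pos.2 hm.1) (sub_pos.2 hm.2)]

/-- The equation reads `ū' = (u₊ - ū)(ū + u₊ - 1)` with second factor bounded below, so `u₊ - ū`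
is integrable. -/
lemma integrable_ub (h : 1/2 < up) (hum : 1 < um + up) (h0 : ub up x0 0 = um) :
    IntegrableOn (fun x => up - ub up x0 x) (Ioi 0) volume := by
  have hc : Continuous fun x => up - ub up x0 x := continuous_const.sub (continuous_ub up x0)
  refine integrableOn_of_bdd (B := (up - um) / (um + up - 1))
    (fun L _ => hc.intervalIntegrable _ _) (fun x _ => by linarith [(ub_mem h x0 x).2]) ?_
  intro L hL
  have hs : 0 < um + up - 1 := by linarith
  have hcd : Continuous fun x => ub up x0 x * (1 - ub up x0 x) - up * (1 - up) :=
    ((continuous_ub up x0).mul (continuous_const.sub (continuous_ub up x0))).sub continuous_const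
  have h2 : ∫ x in (0:ℝ)..L, (ub up x0 x * (1 - ub up x0 x) - up * (1 - up)) =
      ub up x0 L - ub up x0 0 :=
    intervalIntegral.integral_eq_sub_of_hasDerivAt (fun x _ => hasDerivAt_ub up x0 x)
      (hcd.intervalIntegrable _ _)
  have h3 : ∫ x in (0:ℝ)..L, (um + up - 1) * (up - ub up x0 x) ≤
      ∫ x in (0:ℝ)..L, (ub up x0 x * (1 - ub up x0 x) - up * (1 - up)) := by
    refine intervalIntegral.integral_mono_on hL ((hc.const_smul (um + up - 1)).intervalIntegrable _ _)
      (hcd.intervalIntegrable _ _) fun x hx => ?_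
    have h4 : um ≤ ub up x0 x := h0 ▸ ub_mono h x0 hx.1
    nlinarith [mul_nonneg (sub_nonneg.2 (ub_mem h x0 x).2.le) (sub_nonneg.2 h4)]
  rw [intervalIntegral.integral_const_mul, h2, h0] at h3
  rw [le_div_iff₀ hs]
  linarith [(ub_mem h x0 L).2]

lemma pb_dom (hum0 : 0 < um) (h : 1/2 < up) (h1 : up < 1) (hum : 1 < um + up)
    (h0 : ub up x0 0 = um) : Dom up (ub up x0) (pb up x0) := by
  have hi := integrable_ub h hum h0
  have cu := continuous_ub up x0
  constructor
  · refine hi.mono' ((cu.sub continuous_const).pow 2).aestronglyMeasurable ?_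
    refine Eventually.of_forall fun x => ?_
    have hm := ub_mem h x0 x
    rw [Real.norm_eq_abs, abs_of_nonneg (sq_nonneg _)]
    nlinarith [mul_nonneg (sub_nonneg.2 hm.2.le) (by linarith [hm.1] : 0 ≤ 1 - (up - ub up x0 x))]
  · have cp : Continuous (pb up x0) :=
      continuous_iff_continuousAt.2 fun x => (hasDerivAt_pb h h1 x0 x).continuousAt
    refine (hi.const_mul (1 / um + 1 / (1 - up))).mono'
      (cp.sub continuous_const).aestronglyMeasurable ?_
    refine (ae_restrict_mem measurableSet_Ioi).mono fun x hx => ?_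
    have hm := ub_mem h x0 x
    have hu := ub_unit h h1 x0 x
    have h4 : um ≤ ub up x0 x := h0 ▸ ub_mono h x0 (mem_Ioi.1 hx).le
    have hb : 0 < 1 - ub up x0 x := by linarith
    have ha : 0 < 1 - up := by linarith
    have hp : 0 < up := by linarith
    rw [Real.norm_eq_abs, abs_of_neg (by linarith [pb_lt h h1 x0 x])]
    have e : -(pb up x0 x - phiOf up) =
        Real.log (up / ub up x0 x) + Real.log ((1 - ub up x0 x) / (1 - up)) := by
      unfold pb phiOf
      rw [Real.log_div hu.1.ne' hb.ne', Real.log_div hp.ne' ha.ne',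
        Real.log_div hp.ne' hu.1.ne', Real.log_div hb.ne' ha.ne']
      ring
    have l1 := Real.log_le_sub_one_of_pos (div_pos hp hu.1)
    have l2 := Real.log_le_sub_one_of_pos (div_pos hb ha)
    have e1 : up / ub up x0 x - 1 = (up - ub up x0 x) / ub up x0 x := by
      rw [sub_div, div_self hu.1.ne']
    have e2 : (1 - ub up x0 x) / (1 - up) - 1 = (up - ub up x0 x) / (1 - up) := by
      field_simp; ring
    have l3 : (up - ub up x0 x) / ub up x0 x ≤ (up - ub up x0 x) / um :=
      div_le_div_of_nonneg_left (by linarith [hm.2]) hum0 h4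
    rw [e, add_mul, one_div_mul_eq_div, one_div_mul_eq_div]
    linarith

/-- Minimality and uniqueness. In the equality case the calibration forces `φ' = qq φ`, so
`φ = φ̄` by uniqueness for the ODE; as `φ̄ < φ₊` this then forces `u = sg φ̄ = ū`. -/
lemma minimizer (hum0 : 0 < um) (humup : um < up) (h1 : up < 1) (hum : 1 < um + up)
    (h0 : ub up x0 0 = um) {u φ : ℝ → ℝ} (hX : MemXplus um up u φ) :
    GEplus um up (ub up x0) (pb up x0) ≤ GEplus um up u φ ∧
    (GEplus um up u φ = GEplus um up (ub up x0) (pb up x0) →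
      (∀ᵐ x ∂(volume.restrict (Ioi (0:ℝ))), u x = ub up x0 x) ∧
        ∀ x, 0 ≤ x → φ x = pb up x0 x) := by
  have h : 1/2 < up := by linarith
  have hp : 0 < up := by linarith
  have hb := pb_memX h h1 h0
  have hbd := pb_dom hum0 h h1 hum h0
  rw [GEplus_eq hp h1, GEplus_eq hp h1, if_pos hbd]
  by_cases hd : Dom up u φ
  · rw [if_pos hd, EReal.coe_le_coe_iff, EReal.coe_eq_coe_iff]
    obtain ⟨c1, c2⟩ := calibration hum0 humup h1 hum hb hbd (fun x _ => pb_lt h h1 x0 x)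
      (fun x _ => (sg_pb h h1 x0 x).symm) (fun x _ => (hasDerivAt_pb h h1 x0 x).deriv) hX hd
    refine ⟨c1, fun he => ?_⟩
    obtain ⟨d1, d2⟩ := c2 he
    have hφ : ∀ x, 0 ≤ x → φ x = pb up x0 x := fun x hx =>
      ode_unique hum0 humup h1 hum hb hX
        (Eventually.of_forall fun x => (hasDerivAt_pb h h1 x0 x).deriv) d1 hx
    refine ⟨?_, hφ⟩
    filter_upwards [d2, ae_restrict_mem measurableSet_Ioi] with x hx hx0
    have e := hφ x (mem_Ioi.1 hx0).le
    rw [hx (e ▸ pb_lt h h1 x0 x), e, sg_pb h h1]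
  · rw [if_neg hd]
    exact ⟨le_top, fun he => absurd he.symm (EReal.coe_ne_top _)⟩

end profile

/-- For `u₋ + u₊ > 1` the functional `G⁺` is lower semicontinuous and coercive
on `X⁺`, and its unique minimizer is `(ū⁺, φ̄⁺)` where `ū⁺` is the solution on `ℝ₊` of the
stationary Burgers equation with `ū⁺(0) = u₋`, `ū⁺(+∞) = u₊`, explicitly
`ū⁺(x) = 1/2 + A⁺ tanh(A⁺(x - x⁺))`, `A⁺ = |u₊ - 1/2|`, and `φ̄⁺ = s'(ū⁺)`. -/
theorem stmt_8 (um up : ℝ) (h0 : 0 < um) (h1 : um < up) (h2 : up < 1)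
    (hsum : 1 < um + up) :
    -- lower semicontinuity on X⁺
    (∀ (u φ : ℝ → ℝ) (un φn : ℕ → ℝ → ℝ),
      MemXplus um up u φ → (∀ n, MemXplus um up (un n) (φn n)) →
      ConvXplus un φn u φ →
      GEplus um up u φ ≤ Filter.liminf (fun n => GEplus um up (un n) (φn n)) atTop) ∧
    -- coercivity: sublevel sets are (sequentially) precompact in X⁺
    (∀ (un φn : ℕ → ℝ → ℝ) (K : ℝ),
      (∀ n, MemXplus um up (un n) (φn n)) →
      (∀ n, GEplus um up (un n) (φn n) ≤ (K : EReal)) →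
      ∃ σ : ℕ → ℕ, StrictMono σ ∧ ∃ u φ : ℝ → ℝ, MemXplus um up u φ ∧
        ConvXplus (fun n => un (σ n)) (fun n => φn (σ n)) u φ) ∧
    -- unique minimizer
    (∃ x0 : ℝ, ∃ ubar φbar : ℝ → ℝ,
      (∀ x, ubar x = 1/2 + |up - 1/2| * Real.tanh (|up - 1/2| * (x - x0))) ∧
      (∀ x, φbar x = phiOf (ubar x)) ∧
      ubar 0 = um ∧
      Tendsto ubar atTop (𝓝 up) ∧
      (∀ x, HasDerivAt ubar (ubar x * (1 - ubar x) - up * (1 - up)) x) ∧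
      MemXplus um up ubar φbar ∧
      (∀ u φ : ℝ → ℝ, MemXplus um up u φ →
        GEplus um up ubar φbar ≤ GEplus um up u φ ∧
        (GEplus um up u φ = GEplus um up ubar φbar →
          (∀ᵐ x ∂(volume.restrict (Ioi (0:ℝ))), u x = ubar x) ∧
          ∀ x, 0 ≤ x → φ x = φbar x))) := by
  refine ⟨fun u φ un φn h hn hc => GEplus_lsc h0 h1 h2 hsum h hn hc,
    fun un φn K hn hK => GEplus_coercive h0 h1 h2 hsum hn hK, ?_⟩
  have h : 1/2 < up := by linarith
  obtain ⟨x0, hx0⟩ := exists_ub h1 hsum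
  refine ⟨x0, ub up x0, pb up x0, fun x => ?_, fun x => rfl, hx0, tendsto_ub h x0,
    hasDerivAt_ub up x0, pb_memX h h2 hx0, fun u φ hX => minimizer h0 h1 h2 hsum hx0 hX⟩
  rw [abs_of_pos (by linarith : 0 < up - 1/2)]
  rfl

end
end
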